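/- Suppose 𝒴 = span(ℝ^N_0, Y_1,…,Y_R) is a finite-dimensional vector subspace of L^0(Ω,𝐅_T,P) with ℝ^N_0 ⊆ 𝒴, and NCA(𝒴) holds. Then for every f ∈ L^0(Ω,𝐅_T,P) and every φ ∈ L^0(Ω,𝐅_T,P) such that max{|f^i|, |Y^i_1|, …, |Y^i_R|} ≤ φ^i P-a.s. for every i, the set of NCA(𝒴)-prices of f satisfies Π(f) = {(E_{Q^1}[f^1], …, E_{Q^N}[f^N]) : Q ∈ ℳ^φ_e(𝒴)}. -/

import Mathlib

open MeasureTheory Filter Topology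

namespace CollectiveArb

variable {Ω : Type*}

/-- Terminal gains `K_i` of admissible (predictable) strategies for an agent with
filtration `F`, trading the assets indexed by `A`, over times `1,…,T`. -/
def gainsSet {J : ℕ} (F : ℕ → MeasurableSpace Ω) (T : ℕ)
    (A : Finset (Fin J)) (X : Fin J → ℕ → Ω → ℝ) : Set (Ω → ℝ) :=
  { g | ∃ H : Fin J → ℕ → Ω → ℝ,
      (∀ j ∈ A, ∀ s, 1 ≤ s → s ≤ T → Measurable[F (s - 1)] (H j s)) ∧
      g = fun ω => ∑ j ∈ A, ∑ s ∈ Finset.Icc 1 T, H j s ω * (X j s ω - X j (s - 1) ω) }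

/-- No collective arbitrage for the gains sets `K` and the exchange set `Y`:
`(K₁ × ⋯ × K_N + Y) ∩ L⁰₊ = {0}`. -/
def NCA {N : ℕ} [MeasurableSpace Ω] (P : Measure Ω)
    (K : Fin N → Set (Ω → ℝ)) (Y : Set (Fin N → Ω → ℝ)) : Prop :=
  ∀ k : Fin N → Ω → ℝ, ∀ y ∈ Y, (∀ i, k i ∈ K i) →
    (∀ i, ∀ᵐ ω ∂P, 0 ≤ k i ω + y i ω) →
    ∀ i, (fun ω => k i ω + y i ω) =ᵐ[P] fun _ => (0 : ℝ)

/-- `K^𝒴 = ⨉ᵢ (Kᵢ − L⁰₊(ℱᵢ_T)) + 𝒴`. -/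
def KY {N : ℕ} [MeasurableSpace Ω] (P : Measure Ω)
    (FT : Fin N → MeasurableSpace Ω)
    (K : Fin N → Set (Ω → ℝ)) (Y : Set (Fin N → Ω → ℝ)) : Set (Fin N → Ω → ℝ) :=
  { f | ∃ (k l y : Fin N → Ω → ℝ), y ∈ Y ∧ (∀ i, k i ∈ K i) ∧
      (∀ i, Measurable[FT i] (l i) ∧ (∀ᵐ ω ∂P, 0 ≤ l i ω)) ∧
      ∀ i, f i = fun ω => k i ω - l i ω + y i ω }

/-- `ℝ^N_0`: zero-sum deterministic exchanges, viewed as constant random vectors. -/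
def zeroSum (Ω : Type*) (N : ℕ) : Set (Fin N → Ω → ℝ) :=
  { y | ∃ x : Fin N → ℝ, (∑ i, x i) = 0 ∧ ∀ i, y i = fun _ => x i }

/-- `span(ℝ^N_0, Y_1, …, Y_R)`: the finite-dimensional space of exchanges generated
by `ℝ^N_0` and the random vectors `Ys 1, …, Ys R`. -/
def spanExch {N R : ℕ} (Ys : Fin R → Fin N → Ω → ℝ) : Set (Fin N → Ω → ℝ) :=
  { y | ∃ (x : Fin N → ℝ) (c : Fin R → ℝ), (∑ i, x i) = 0 ∧
      ∀ i, y i = fun ω => x i + ∑ r, c r * Ys r i ω }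

/-- `span(𝒴₀ ∪ {g})` for a vector subspace `𝒴₀`. -/
def spanWith {N : ℕ} (Y0 : Set (Fin N → Ω → ℝ)) (g : Fin N → Ω → ℝ) :
    Set (Fin N → Ω → ℝ) :=
  { y | ∃ w ∈ Y0, ∃ c : ℝ, ∀ i, y i = fun ω => w i ω + c * g i ω }

/-- Equivalent martingale measures `Mᵢₑ` for the assets in `A`, w.r.t. the filtration `F`. -/
def martMeasures {J : ℕ} [MeasurableSpace Ω] (P : Measure Ω)
    (F : ℕ → MeasurableSpace Ω) (T : ℕ) (A : Finset (Fin J))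
    (X : Fin J → ℕ → Ω → ℝ) : Set (Measure Ω) :=
  { Q | IsProbabilityMeasure Q ∧ Q ≪ P ∧ P ≪ Q ∧
      ∀ j ∈ A, (∀ t, t ≤ T → Integrable (X j t) Q) ∧
        ∀ s t, s ≤ t → t ≤ T → X j s =ᵐ[Q] Q[X j t | F s] }

/-- Equivalent collective martingale measures `ℳₑ(𝒴)`. -/
def MeY {J N : ℕ} [MeasurableSpace Ω] (P : Measure Ω)
    (F : Fin N → ℕ → MeasurableSpace Ω) (T : ℕ) (assets : Fin N → Finset (Fin J))
    (X : Fin J → ℕ → Ω → ℝ) (Y : Set (Fin N → Ω → ℝ)) : Set (Fin N → Measure Ω) :=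
  { Q | (∀ i, Q i ∈ martMeasures P (F i) T (assets i) X) ∧
      (∀ y ∈ Y, ∀ i, Integrable (y i) (Q i)) ∧
      ∀ y ∈ Y, (∑ i, ∫ ω, y i ω ∂(Q i)) ≤ 0 }

/-- `ℳ^φ_e(𝒴) = {Q ∈ ℳₑ(𝒴) : E_{Qⁱ}[|φⁱ|] < ∞ ∀ i}`. -/
def MeYphi {J N : ℕ} [MeasurableSpace Ω] (P : Measure Ω)
    (F : Fin N → ℕ → MeasurableSpace Ω) (T : ℕ) (assets : Fin N → Finset (Fin J))
    (X : Fin J → ℕ → Ω → ℝ) (Y : Set (Fin N → Ω → ℝ))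
    (φ : Fin N → Ω → ℝ) : Set (Fin N → Measure Ω) :=
  { Q | Q ∈ MeY P F T assets X Y ∧ ∀ i, Integrable (φ i) (Q i) }

/-- Closedness of a set of random vectors under componentwise `P`-a.s. convergence
of sequences (within `L⁰(Ω, 𝐅_T, P)`). -/
def ClosedAS {N : ℕ} [MeasurableSpace Ω] (P : Measure Ω)
    (FT : Fin N → MeasurableSpace Ω) (S : Set (Fin N → Ω → ℝ)) : Prop :=
  ∀ (f : ℕ → Fin N → Ω → ℝ) (g : Fin N → Ω → ℝ),
    (∀ n, f n ∈ S) → (∀ i, Measurable[FT i] (g i)) →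
    (∀ i, ∀ᵐ ω ∂P, Tendsto (fun n => f n i ω) atTop (𝓝 (g i ω))) →
    g ∈ S

/-- Collective superhedging price `ρ^𝒴₊(f)` (with `inf ∅ = +∞`). -/
noncomputable def rhoPlus {N : ℕ} [MeasurableSpace Ω] (P : Measure Ω)
    (K : Fin N → Set (Ω → ℝ)) (Y : Set (Fin N → Ω → ℝ))
    (f : Fin N → Ω → ℝ) : EReal :=
  sInf { z : EReal | ∃ m : Fin N → ℝ, z = ((∑ i, m i : ℝ) : EReal) ∧
      ∃ k : Fin N → Ω → ℝ, (∀ i, k i ∈ K i) ∧ ∃ y ∈ Y,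
        ∀ i, ∀ᵐ ω ∂P, f i ω ≤ m i + k i ω + y i ω }

/-- Collective subhedging price `ρ^𝒴₋(f)` (with `sup ∅ = −∞`). -/
noncomputable def rhoMinus {N : ℕ} [MeasurableSpace Ω] (P : Measure Ω)
    (K : Fin N → Set (Ω → ℝ)) (Y : Set (Fin N → Ω → ℝ))
    (f : Fin N → Ω → ℝ) : EReal :=
  sSup { z : EReal | ∃ m : Fin N → ℝ, z = ((∑ i, m i : ℝ) : EReal) ∧
      ∃ k : Fin N → Ω → ℝ, (∀ i, k i ∈ K i) ∧ ∃ y ∈ Y,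
        ∀ i, ∀ᵐ ω ∂P, m i + k i ω - y i ω ≤ f i ω }

/-- `ρ^𝒴₊(f)` is attained. -/
def rhoPlusAttained {N : ℕ} [MeasurableSpace Ω] (P : Measure Ω)
    (K : Fin N → Set (Ω → ℝ)) (Y : Set (Fin N → Ω → ℝ))
    (f : Fin N → Ω → ℝ) : Prop :=
  ∃ (m : Fin N → ℝ) (k y : Fin N → Ω → ℝ), y ∈ Y ∧ (∀ i, k i ∈ K i) ∧
    (∀ i, ∀ᵐ ω ∂P, f i ω ≤ m i + k i ω + y i ω) ∧
    rhoPlus P K Y f = ((∑ i, m i : ℝ) : EReal)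

/-- `ρ^𝒴₋(f)` is attained. -/
def rhoMinusAttained {N : ℕ} [MeasurableSpace Ω] (P : Measure Ω)
    (K : Fin N → Set (Ω → ℝ)) (Y : Set (Fin N → Ω → ℝ))
    (f : Fin N → Ω → ℝ) : Prop :=
  ∃ (m : Fin N → ℝ) (k y : Fin N → Ω → ℝ), y ∈ Y ∧ (∀ i, k i ∈ K i) ∧
    (∀ i, ∀ᵐ ω ∂P, m i + k i ω - y i ω ≤ f i ω) ∧
    rhoMinus P K Y f = ((∑ i, m i : ℝ) : EReal)

/-- `f` is `𝒴`-collectively replicable: `f ∈ ℝ^N + (K₁ × ⋯ × K_N) + 𝒴` in `L⁰`. -/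
def Replicable {N : ℕ} [MeasurableSpace Ω] (P : Measure Ω)
    (K : Fin N → Set (Ω → ℝ)) (Y : Set (Fin N → Ω → ℝ))
    (f : Fin N → Ω → ℝ) : Prop :=
  ∃ (m : Fin N → ℝ) (k y : Fin N → Ω → ℝ), y ∈ Y ∧ (∀ i, k i ∈ K i) ∧
    ∀ i, f i =ᵐ[P] fun ω => m i + k i ω + y i ω

/-- Terminal gains of predictable strategies in the extended market consisting of the
assets in `A` together with one additional asset `Z`. -/
def extGainsSet {J : ℕ} (F : ℕ → MeasurableSpace Ω) (T : ℕ)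
    (A : Finset (Fin J)) (X : Fin J → ℕ → Ω → ℝ) (Z : ℕ → Ω → ℝ) : Set (Ω → ℝ) :=
  { g | ∃ (H : Fin J → ℕ → Ω → ℝ) (G : ℕ → Ω → ℝ),
      (∀ j ∈ A, ∀ s, 1 ≤ s → s ≤ T → Measurable[F (s - 1)] (H j s)) ∧
      (∀ s, 1 ≤ s → s ≤ T → Measurable[F (s - 1)] (G s)) ∧
      g = fun ω => (∑ j ∈ A, ∑ s ∈ Finset.Icc 1 T, H j s ω * (X j s ω - X j (s - 1) ω))
        + ∑ s ∈ Finset.Icc 1 T, G s ω * (Z s ω - Z (s - 1) ω) }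

/-- `π ∈ ℝ^N` is an NCA(𝒴)-price for the claims `f = (f¹,…,f^N)`: there are
`𝔽ⁱ`-adapted processes `Zⁱ` (the new assets `X^{J+i}`) with `Zⁱ_0 = πⁱ`, `Zⁱ_T = fⁱ`,
such that NCA(𝒴) holds in the extended market where agent `i` trades the assets in
`(i) ∪ {J+i}`. -/
def IsNCAPrice {J N : ℕ} [MeasurableSpace Ω] (P : Measure Ω)
    (F : Fin N → ℕ → MeasurableSpace Ω) (T : ℕ) (assets : Fin N → Finset (Fin J))
    (X : Fin J → ℕ → Ω → ℝ) (Y : Set (Fin N → Ω → ℝ))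
    (f : Fin N → Ω → ℝ) (pi : Fin N → ℝ) : Prop :=
  ∃ Z : Fin N → ℕ → Ω → ℝ,
    (∀ i t, t ≤ T → Measurable[F i t] (Z i t)) ∧
    (∀ i, Z i 0 =ᵐ[P] fun _ => pi i) ∧
    (∀ i, Z i T =ᵐ[P] f i) ∧
    NCA P (fun i => extGainsSet (F i) T (assets i) X (Z i)) Y

/-!
Let agent `i` trade on its own copy of `Ω`. On the disjoint union `Fin N × Ω` the `N` agents become
a single trader, and an exchange `(Y¹, …, Y^N)` is one more claim, available at price zero, so
NCA(𝒴) is ordinary absence of arbitrage for the gains of this trader enlarged by a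
finite-dimensional space of claims. Along random subsequences the strategies either converge or
reveal a redundant asset, which shows that the claims dominated by such gains are closed under
almost sure limits; the Kreps–Yan separation argument then yields an equivalent martingale measure
on the disjoint union. The zero-sum constants force it to give the same mass to all copies of `Ω`,
so that its normalized restrictions to them form the vector `(Q¹, …, Q^N)`. Pricing the extended
market by this vector shows that every price is a vector of expectations.

Conversely, given such a vector, let the new asset of agent `i` be the `Qⁱ`-martingale
`E_{Qⁱ}[fⁱ | ℱⁱ_t]`. Gains bounded below by an integrable random variable have expectation zero,
even though the strategies are not assumed bounded, so the extended market admits no arbitrage.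
-/

section RandomSubsequences

variable {m : MeasurableSpace Ω}

lemma measurable_paste {h : ℕ → Ω → ℝ} (hh : ∀ n, Measurable (h n)) {σ : Ω → ℕ}
    (hσ : Measurable σ) : Measurable fun ω => h (σ ω) ω :=
  (measurable_from_prod_countable_right hh : Measurable (Function.uncurry h)).comp
    (hσ.prodMk measurable_id)

lemma exists_ge_abs_sub_limsup_lt {u : ℕ → ℝ} (hu : ∀ n, |u n| ≤ 1) {ε : ℝ} (hε : 0 < ε)
    (n : ℕ) : ∃ k, n ≤ k ∧ |u k - limsup u atTop| < ε := by
  have hbdd : IsBoundedUnder (· ≤ ·) atTop u :=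
    isBoundedUnder_of ⟨1, fun n => (abs_le.1 (hu n)).2⟩
  have hcob : IsCoboundedUnder (· ≤ ·) atTop u :=
    IsBoundedUnder.isCoboundedUnder_le (isBoundedUnder_of ⟨-1, fun n => (abs_le.1 (hu n)).1⟩)
  have hlower : ∃ᶠ k in atTop, limsup u atTop - ε < u k :=
    frequently_lt_of_lt_limsup hcob (by linarith)
  have hupper : ∀ᶠ k in atTop, u k < limsup u atTop + ε :=
    eventually_lt_of_limsup_lt (by linarith) hbdd
  obtain ⟨k, hk₁, hk₂, hnk⟩ := (hlower.and_eventually (hupper.and (eventually_ge_atTop n))).exists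
  exact ⟨k, hnk, abs_lt.2 ⟨by linarith, by linarith⟩⟩

lemma exists_measurable_subseq {u : ℕ → Ω → ℝ} (hu : ∀ n, Measurable (u n))
    (hb : ∀ n ω, |u n ω| ≤ 1) :
    ∃ (σ : ℕ → Ω → ℕ) (L : Ω → ℝ), (∀ n, Measurable (σ n)) ∧ Measurable L ∧
      (∀ n ω, n ≤ σ n ω) ∧ ∀ ω, Tendsto (fun n => u (σ n ω) ω) atTop (𝓝 (L ω)) := by
  classical
  let L : Ω → ℝ := fun ω => limsup (fun n => u n ω) atTop
  have hL : Measurable L := Measurable.limsup hu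
  have hex (n : ℕ) (ω : Ω) : ∃ k, n ≤ k ∧ |u k ω - L ω| < 1 / ((n : ℝ) + 1) :=
    exists_ge_abs_sub_limsup_lt (fun k => hb k ω) (by positivity) n
  refine ⟨fun n ω => Nat.find (hex n ω), L, fun n => measurable_find (hex n) fun k => ?_, hL,
    fun n ω => (Nat.find_spec (hex n ω)).1, fun ω => ?_⟩
  · exact (MeasurableSet.const _).inter
      (measurableSet_lt ((hu k).sub hL).abs measurable_const)
  · rw [tendsto_iff_dist_tendsto_zero]
    exact squeeze_zero (fun n => dist_nonneg) (fun n => (Nat.find_spec (hex n ω)).2.le)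
      tendsto_one_div_add_atTop_nhds_zero_nat

/-- Kabanov–Stricker: apply `exists_measurable_subseq` to `h / (1 + |h|)`; the explosion set `E`
is where its limit is `±1`. -/
lemma exists_subseq_tendsto_or_explode {h : ℕ → Ω → ℝ} (hh : ∀ n, Measurable (h n)) :
    ∃ (σ : ℕ → Ω → ℕ) (E : Set Ω) (L H : Ω → ℝ), (∀ n, Measurable (σ n)) ∧ MeasurableSet E ∧
      Measurable L ∧ Measurable H ∧ (∀ n ω, n ≤ σ n ω) ∧
      (∀ ω ∉ E, Tendsto (fun n => h (σ n ω) ω) atTop (𝓝 (H ω))) ∧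
      ∀ ω ∈ E, |L ω| = 1 ∧ Tendsto (fun n => (1 + |h (σ n ω) ω|)⁻¹) atTop (𝓝 0) ∧
        Tendsto (fun n => (1 + |h (σ n ω) ω|)⁻¹ * h (σ n ω) ω) atTop (𝓝 (L ω)) := by
  let u : ℕ → Ω → ℝ := fun n ω => (1 + |h n ω|)⁻¹ * h n ω
  have hpos (n : ℕ) (ω : Ω) : 0 < 1 + |h n ω| := by positivity
  have habs (n : ℕ) (ω : Ω) : |u n ω| = (1 + |h n ω|)⁻¹ * |h n ω| := by
    rw [abs_mul, abs_of_pos (inv_pos.2 (hpos n ω))]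
  have hgap (n : ℕ) (ω : Ω) : 1 - |u n ω| = (1 + |h n ω|)⁻¹ := by
    have := hpos n ω
    rw [habs]
    field_simp
    ring
  obtain ⟨σ, L, hσ, hL, hσn, hlim⟩ := exists_measurable_subseq (u := u)
    (fun n => ((hh n).abs.const_add 1).inv.mul (hh n))
    (fun n ω => by linarith [hgap n ω, inv_pos.2 (hpos n ω)])
  refine ⟨σ, {ω | |L ω| = 1}, L, fun ω => L ω / (1 - |L ω|), hσ,
    hL.abs (measurableSet_singleton 1), hL, hL.div (hL.abs.const_sub 1), hσn,
    fun ω hω => ?_, fun ω hω => ⟨hω, ?_, hlim ω⟩⟩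
  · have hL1 : 1 - |L ω| ≠ 0 := fun h0 => hω (sub_eq_zero.1 h0).symm
    refine ((hlim ω).div ((hlim ω).abs.const_sub 1) hL1).congr fun n => ?_
    simp only [Pi.div_apply]
    rw [hgap, div_inv_eq_mul, mul_comm, mul_inv_cancel_left₀ (hpos _ _).ne']
  · have hgap_lim := (hlim ω).abs.const_sub 1
    rw [show |L ω| = 1 from hω, sub_self] at hgap_lim
    exact hgap_lim.congr fun n => hgap _ _

end RandomSubsequences

section DominatedClosed

/-- The `m`-measurable multiples of `ξ`: the gains from a position in an asset with increment `ξ`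
whose size is decided on the information `m`. -/
def measurableMultiples (m : MeasurableSpace Ω) (ξ : Ω → ℝ) : Submodule ℝ (Ω → ℝ) where
  carrier := {k | ∃ h : Ω → ℝ, Measurable[m] h ∧ k = h * ξ}
  add_mem' := by
    rintro _ _ ⟨h, hh, rfl⟩ ⟨h', hh', rfl⟩
    exact ⟨h + h', hh.add hh', (add_mul h h' ξ).symm⟩
  zero_mem' := ⟨0, measurable_const, (zero_mul ξ).symm⟩
  smul_mem' := by
    rintro c _ ⟨h, hh, rfl⟩
    exact ⟨c • h, hh.const_smul c, (smul_mul_assoc c h ξ).symm⟩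

/-- `V` is a module over the `m`-measurable functions and is closed under pasting countably many
of its elements along an `m`-measurable partition. -/
structure MeasStable (m : MeasurableSpace Ω) (V : Submodule ℝ (Ω → ℝ)) : Prop where
  mul_mem : ∀ h : Ω → ℝ, Measurable[m] h → ∀ k ∈ V, h * k ∈ V
  paste_mem : ∀ k : ℕ → Ω → ℝ, (∀ n, k n ∈ V) → ∀ σ : Ω → ℕ, Measurable[m] σ →
    (fun ω => k (σ ω) ω) ∈ V

lemma measStable_measurableMultiples {m m' : MeasurableSpace Ω} (hm : m' ≤ m) (ξ : Ω → ℝ) :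
    MeasStable m' (measurableMultiples m ξ) where
  mul_mem := by
    rintro g hg _ ⟨h, hh, rfl⟩
    exact ⟨g * h, (hg.mono hm le_rfl).mul hh, (mul_assoc g h ξ).symm⟩
  paste_mem k hk σ hσ := by
    choose h hh hk using hk
    refine ⟨_, measurable_paste hh (hσ.mono hm le_rfl), funext fun ω => ?_⟩
    rw [hk]
    rfl

lemma measStable_bot (m : MeasurableSpace Ω) : MeasStable m ⊥ where
  mul_mem := by
    rintro h - _ rfl
    exact mul_zero h
  paste_mem k hk σ _ := funext fun ω => congrFun (hk (σ ω)) ω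

lemma MeasStable.sup {m : MeasurableSpace Ω} {V W : Submodule ℝ (Ω → ℝ)} (hV : MeasStable m V)
    (hW : MeasStable m W) : MeasStable m (V ⊔ W) where
  mul_mem h hh k hk := by
    obtain ⟨v, hv, w, hw, rfl⟩ := Submodule.mem_sup.1 hk
    rw [mul_add]
    exact Submodule.add_mem_sup (hV.mul_mem h hh v hv) (hW.mul_mem h hh w hw)
  paste_mem k hk σ hσ := by
    choose v hv w hw hvw using fun n => Submodule.mem_sup.1 (hk n)
    have hk_eq : (fun ω => k (σ ω) ω) = (fun ω => v (σ ω) ω) + fun ω => w (σ ω) ω :=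
      funext fun ω => (congrFun (hvw (σ ω)) ω).symm
    rw [hk_eq]
    exact Submodule.add_mem_sup (hV.paste_mem v hv σ hσ) (hW.paste_mem w hw σ hσ)

lemma MeasStable.biSup {ι : Type*} {m : MeasurableSpace Ω} {V : ι → Submodule ℝ (Ω → ℝ)}
    {s : Finset ι} (hV : ∀ a ∈ s, MeasStable m (V a)) : MeasStable m (⨆ a ∈ s, V a) := by
  classical
  induction s using Finset.induction_on with
  | empty => simpa using measStable_bot m
  | insert a s _ ih =>
    rw [Finset.iSup_insert]
    exact (hV a (Finset.mem_insert_self a s)).sup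
      (ih fun b hb => hV b (Finset.mem_insert_of_mem hb))

lemma measStable_trivial (V : Submodule ℝ (Ω → ℝ)) : MeasStable ⊥ V where
  mul_mem h hh k hk := by
    obtain ⟨c, rfl⟩ := stronglyMeasurable_bot_iff.1 (Measurable.stronglyMeasurable hh)
    exact V.smul_mem c hk
  paste_mem k hk σ hσ := by
    obtain ⟨n, rfl⟩ := stronglyMeasurable_bot_iff.1 (Measurable.stronglyMeasurable hσ)
    exact hk n

lemma measurableMultiples_bot (ξ : Ω → ℝ) : measurableMultiples ⊥ ξ = ℝ ∙ ξ := by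
  refine le_antisymm ?_ ((Submodule.span_singleton_le_iff_mem _ _).2
    ⟨1, measurable_const, (one_mul ξ).symm⟩)
  rintro _ ⟨h, hh, rfl⟩
  exact (measStable_trivial _).mul_mem h hh ξ (Submodule.mem_span_singleton_self ξ)

variable {m : MeasurableSpace Ω} [MeasurableSpace Ω] {μ : Measure Ω} {V W : Submodule ℝ (Ω → ℝ)}

/-- Every almost sure limit of functions dominated by elements of `V` is dominated by an
element of `V`; that is, `V - L⁰₊` is closed under almost sure convergence. -/
def DominatedClosed (μ : Measure Ω) (V : Submodule ℝ (Ω → ℝ)) : Prop :=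
  ∀ (k f : ℕ → Ω → ℝ) (g : Ω → ℝ), (∀ n, k n ∈ V) → (∀ n, f n ≤ᵐ[μ] k n) →
    (∀ᵐ ω ∂μ, Tendsto (fun n => f n ω) atTop (𝓝 (g ω))) → ∃ k₀ ∈ V, g ≤ᵐ[μ] k₀

/-- No arbitrage: the only almost surely nonnegative element of `V` is zero. -/
def NoArb (μ : Measure Ω) (V : Submodule ℝ (Ω → ℝ)) : Prop :=
  ∀ k ∈ V, 0 ≤ᵐ[μ] k → k =ᵐ[μ] 0

lemma NoArb.mono (hW : NoArb μ W) (hVW : V ≤ W) : NoArb μ V :=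
  fun k hk => hW k (hVW hk)

lemma dominatedClosed_bot : DominatedClosed μ ⊥ := by
  refine fun k f g hk hf hg => ⟨0, Submodule.zero_mem _, ?_⟩
  filter_upwards [ae_all_iff.2 hf, hg] with ω hω hgω
  refine le_of_tendsto hgω (Eventually.of_forall fun n => (hω n).trans_eq ?_)
  rw [(Submodule.mem_bot ℝ).1 (hk n)]

section SupMultiples

variable {ξ : Ω → ℝ} {h v f : ℕ → Ω → ℝ} {g L H k₀ : Ω → ℝ} {E : Set Ω}

lemma DominatedClosed.exists_le_of_explosion (hc : DominatedClosed μ V) (hV : MeasStable m V)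
    (hE : MeasurableSet[m] E) (hh : ∀ n, Measurable[m] (h n)) (hv : ∀ n, v n ∈ V)
    (hf : ∀ n, f n ≤ᵐ[μ] h n * ξ + v n)
    (hg : ∀ᵐ ω ∂μ, Tendsto (fun n => f n ω) atTop (𝓝 (g ω)))
    (hlim : ∀ ω ∈ E, Tendsto (fun n => (1 + |h n ω|)⁻¹) atTop (𝓝 0) ∧
      Tendsto (fun n => (1 + |h n ω|)⁻¹ * h n ω) atTop (𝓝 (L ω))) :
    ∃ k₀ ∈ V, -(E.indicator L * ξ) ≤ᵐ[μ] k₀ := by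
  let r : ℕ → Ω → ℝ := fun n => E.indicator fun ω => (1 + |h n ω|)⁻¹
  have hr (n : ℕ) : Measurable[m] (r n) :=
    ((measurable_id.abs.const_add 1).inv.comp (hh n)).indicator hE
  have hr_nonneg (n : ℕ) (ω : Ω) : 0 ≤ r n ω := Set.indicator_nonneg (fun ω _ => by positivity) ω
  refine hc (fun n => r n * v n) (fun n => r n * (f n - h n * ξ)) _
    (fun n => hV.mul_mem (r n) (hr n) (v n) (hv n)) (fun n => ?_) ?_
  · filter_upwards [hf n] with ω hω
    exact mul_le_mul_of_nonneg_left (sub_le_iff_le_add'.2 hω) (hr_nonneg n ω)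
  · filter_upwards [hg] with ω hω
    by_cases hωE : ω ∈ E
    · have hlim' := ((hlim ω hωE).1.mul hω).sub ((hlim ω hωE).2.mul_const (ξ ω))
      simpa [r, hωE, mul_sub, mul_assoc] using hlim'
    · simp [r, hωE]

lemma DominatedClosed.exists_le_of_redundant (hc : DominatedClosed μ V) (hV : MeasStable m V)
    (hE : MeasurableSet[m] E) (hh : ∀ n, Measurable[m] (h n)) (hL : Measurable[m] L)
    (hv : ∀ n, v n ∈ V) (hk₀ : k₀ ∈ V) (hf : ∀ n, f n ≤ᵐ[μ] h n * ξ + v n)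
    (hg : ∀ᵐ ω ∂μ, Tendsto (fun n => f n ω) atTop (𝓝 (g ω)))
    (hlim : ∀ ω ∉ E, Tendsto (fun n => h n ω) atTop (𝓝 (H ω)))
    (hred : ∀ᵐ ω ∂μ, ω ∈ E → ξ ω = L ω * k₀ ω) :
    ∃ k₁ ∈ V, g - Eᶜ.indicator H * ξ ≤ᵐ[μ] k₁ := by
  refine hc (fun n => E.indicator (h n) * L * k₀ + v n) (fun n => f n - Eᶜ.indicator (h n) * ξ) _
    (fun n => V.add_mem (hV.mul_mem _ (((hh n).indicator hE).mul hL) _ hk₀) (hv n))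
    (fun n => ?_) ?_
  · filter_upwards [hf n, hred] with ω hω hred
    by_cases hωE : ω ∈ E
    · simpa [hωE, mul_assoc, ← hred hωE] using hω
    · simpa [hωE, add_comm] using hω
  · filter_upwards [hg] with ω hω
    by_cases hωE : ω ∈ E
    · simpa [hωE] using hω
    · simpa [hωE] using hω.sub ((hlim ω hωE).mul_const (ξ ω))

/-- Pass to a random subsequence along which the coefficients of `ξ` converge or explode. Where
they explode, rescaling shows that `ξ` coincides with an element of `V`, so it can be traded
within `V` instead. -/
theorem DominatedClosed.sup_measurableMultiples (hc : DominatedClosed μ V) (hV : MeasStable m V)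
    (hNA : NoArb μ (V ⊔ measurableMultiples m ξ)) :
    DominatedClosed μ (V ⊔ measurableMultiples m ξ) := by
  intro k f g hk hf hg
  choose v hv w hw hvw using fun n => Submodule.mem_sup.1 (hk n)
  choose h hh hhw using hw
  obtain ⟨σ, E, L, H, hσ, hE, hL, hH, hσn, htendsto, hexplode⟩ :=
    exists_subseq_tendsto_or_explode hh
  have hh' (n : ℕ) : Measurable[m] fun ω => h (σ n ω) ω := measurable_paste hh (hσ n)
  have hv' (n : ℕ) : (fun ω => v (σ n ω) ω) ∈ V := hV.paste_mem v hv (σ n) (hσ n)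
  have hf' (n : ℕ) : (fun ω => f (σ n ω) ω) ≤ᵐ[μ]
      (fun ω => h (σ n ω) ω) * ξ + fun ω => v (σ n ω) ω := by
    filter_upwards [ae_all_iff.2 hf] with ω hω
    refine (hω (σ n ω)).trans_eq ?_
    rw [← hvw, hhw, add_comm]
    rfl
  have hg' : ∀ᵐ ω ∂μ, Tendsto (fun n => f (σ n ω) ω) atTop (𝓝 (g ω)) := by
    filter_upwards [hg] with ω hω
    exact hω.comp (tendsto_atTop_mono (fun n => hσn n ω) tendsto_id)
  have mem_sup {u c : Ω → ℝ} (hu : u ∈ V) (hc : Measurable[m] c) :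
      u + c * ξ ∈ V ⊔ measurableMultiples m ξ := Submodule.add_mem_sup hu ⟨c, hc, rfl⟩
  obtain ⟨k₀, hk₀, hk₀_le⟩ := hc.exists_le_of_explosion hV hE hh' hv' hf' hg'
    fun ω hω => (hexplode ω hω).2
  have hzero := hNA _ (mem_sup hk₀ (hL.indicator hE)) <| by
    filter_upwards [hk₀_le] with ω hω
    exact neg_le_iff_add_nonneg.1 hω
  have hred : ∀ᵐ ω ∂μ, ω ∈ E → ξ ω = L ω * (-k₀) ω := by
    filter_upwards [hzero] with ω hω hωE
    have hL_sq : L ω * L ω = 1 := by rw [← abs_mul_abs_self, (hexplode ω hωE).1, one_mul]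
    simp only [Pi.add_apply, Pi.mul_apply, Set.indicator_of_mem hωE, Pi.zero_apply] at hω
    rw [Pi.neg_apply]
    linear_combination L ω * hω - ξ ω * hL_sq
  obtain ⟨k₁, hk₁, hk₁_le⟩ := hc.exists_le_of_redundant hV hE hh' hL hv' (V.neg_mem hk₀) hf' hg'
    htendsto hred
  refine ⟨_, mem_sup hk₁ (hH.indicator hE.compl), ?_⟩
  filter_upwards [hk₁_le] with ω hω
  exact sub_le_iff_le_add.1 hω

end SupMultiples

theorem dominatedClosed_biSup_measurableMultiples {ι : Type*} {𝒢 : ℕ → MeasurableSpace Ω}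
    (h𝒢 : Monotone 𝒢) (τ : ι → ℕ) (ξ : ι → Ω → ℝ) (s : Finset ι)
    (hNA : NoArb μ (⨆ a ∈ s, measurableMultiples (𝒢 (τ a)) (ξ a))) :
    DominatedClosed μ (⨆ a ∈ s, measurableMultiples (𝒢 (τ a)) (ξ a)) := by
  classical
  induction s using Finset.induction_on_min_value τ with
  | empty => simpa using dominatedClosed_bot
  | insert a s _ hmin ih =>
    rw [Finset.iSup_insert, sup_comm] at hNA ⊢
    exact (ih (hNA.mono le_sup_left)).sup_measurableMultiples
      (MeasStable.biSup fun b hb => measStable_measurableMultiples (h𝒢 (hmin b hb)) _) hNA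

lemma DominatedClosed.sup_of_fg (hc : DominatedClosed μ V) (hW : W.FG)
    (hNA : NoArb μ (V ⊔ W)) : DominatedClosed μ (V ⊔ W) := by
  induction W, hW using Submodule.fg_induction generalizing V with
  | singleton ξ =>
    rw [← measurableMultiples_bot] at hNA ⊢
    exact hc.sup_measurableMultiples (measStable_trivial V) hNA
  | sup W₁ W₂ _ _ ih₁ ih₂ =>
    rw [← sup_assoc] at hNA ⊢
    exact ih₂ (ih₁ hc (hNA.mono le_sup_left)) hNA

end DominatedClosed

section KrepsYan

open scoped ENNReal

variable [MeasurableSpace Ω] {μ : Measure Ω} {V : Submodule ℝ (Ω → ℝ)}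

/-- The square integrable functions dominating an element of `V`, that is, the claims which can
be superhedged at no cost by trading in `V`. -/
def dominatingCone (hc : DominatedClosed μ V) : ProperCone ℝ (Lp ℝ 2 μ) where
  carrier := {c | ∃ k ∈ V, k ≤ᵐ[μ] c}
  add_mem' := by
    rintro c d ⟨k, hk, hkc⟩ ⟨l, hl, hld⟩
    refine ⟨k + l, V.add_mem hk hl, ?_⟩
    filter_upwards [hkc, hld, Lp.coeFn_add c d] with ω hkc hld hadd
    exact (add_le_add hkc hld).trans_eq hadd.symm
  zero_mem' := ⟨0, V.zero_mem, (Lp.coeFn_zero ℝ 2 μ).symm.le⟩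
  smul_mem' := by
    rintro a c ⟨k, hk, hkc⟩
    refine ⟨(a : ℝ) • k, V.smul_mem _ hk, ?_⟩
    filter_upwards [hkc, Lp.coeFn_smul (a : ℝ) c] with ω hkc hsmul
    exact (mul_le_mul_of_nonneg_left hkc a.2).trans_eq hsmul.symm
  isClosed' := by
    refine IsSeqClosed.isClosed fun c c₀ hcV hlim => ?_
    obtain ⟨ns, -, hns⟩ := (tendstoInMeasure_of_tendsto_Lp hlim).exists_seq_tendsto_ae
    choose k hk hkc using hcV
    obtain ⟨k₀, hk₀, hle⟩ := hc (fun n => -k (ns n)) (fun n => -c (ns n)) (-c₀)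
      (fun n => V.neg_mem (hk _)) (fun n => (hkc (ns n)).mono fun ω hω => neg_le_neg hω)
      (hns.mono fun ω hω => hω.neg)
    exact ⟨-k₀, V.neg_mem hk₀, hle.mono fun ω hω => neg_le.1 hω⟩

lemma mem_dominatingCone {hc : DominatedClosed μ V} {c : Lp ℝ 2 μ} :
    c ∈ dominatingCone hc ↔ ∃ k ∈ V, k ≤ᵐ[μ] c :=
  Iff.rfl

section MaximalSupport

variable {D : ProperCone ℝ (Lp ℝ 2 μ)}

lemma exists_mem_cone_pos_of_seq_pos (hD : ∀ z ∈ D, 0 ≤ z) {w : ℕ → Lp ℝ 2 μ}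
    (hw : ∀ n, w n ∈ D) : ∃ z ∈ D, ∀ n, ∀ᵐ ω ∂μ, 0 < w n ω → 0 < z ω := by
  let c : ℕ → ℝ := fun n => (1 / 2) ^ n / (1 + ‖w n‖)
  have hc (n : ℕ) : 0 < c n := by positivity
  have hcw (n : ℕ) : c n • w n ∈ D := D.smul_mem (hw n) (hc n).le
  have hsum : Summable fun n => c n • w n := by
    refine Summable.of_norm_bounded summable_geometric_two fun n => ?_
    rw [norm_smul, Real.norm_of_nonneg (hc n).le, div_mul_eq_mul_div,
      div_le_iff₀ (by positivity)]
    gcongr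
    linarith
  refine ⟨∑' n, c n • w n, tsum_mem D.isClosed hcw, fun n => ?_⟩
  have hle : c n • w n ≤ ∑' n, c n • w n := hsum.le_tsum n fun k _ => hD _ (hcw k)
  filter_upwards [(Lp.coeFn_le _ _).2 hle, Lp.coeFn_smul (c n) (w n)] with ω hω hsmul hpos
  exact (mul_pos (hc n) hpos).trans_le (hsmul.symm.trans_le hω)

/-- Exhaustion: maximize `μ {z > 0}` over the cone. -/
lemma exists_mem_cone_maximal_support [IsFiniteMeasure μ] (hD : ∀ z ∈ D, 0 ≤ z) :
    ∃ z ∈ D, ∀ w ∈ D, ∀ᵐ ω ∂μ, 0 < w ω → 0 < z ω := by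
  let S : Set ℝ≥0∞ := (fun z : Lp ℝ 2 μ => μ {ω | 0 < z ω}) '' D
  obtain ⟨u, -, hu, huS⟩ := exists_seq_tendsto_sSup (S := S) (D.nonempty.image _)
    (OrderTop.bddAbove S)
  choose w hw hwu using huS
  obtain ⟨z, hz, hwz⟩ := exists_mem_cone_pos_of_seq_pos hD hw
  have hsSup : sSup S ≤ μ {ω | 0 < z ω} :=
    le_of_tendsto' hu fun n => (hwu n).symm.trans_le (measure_mono_ae (hwz n))
  refine ⟨z, hz, fun v hv => ?_⟩
  have hzv : {ω | 0 < z ω} ≤ᵐ[μ] {ω | 0 < (z + v) ω} := by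
    filter_upwards [Lp.coeFn_add z v, (Lp.coeFn_nonneg v).2 (hD v hv)] with ω hadd hv_nonneg hpos
    exact (add_pos_of_pos_of_nonneg hpos hv_nonneg).trans_eq hadd.symm
  have hvz : {ω | 0 < v ω} ≤ᵐ[μ] {ω | 0 < (z + v) ω} := by
    filter_upwards [Lp.coeFn_add z v, (Lp.coeFn_nonneg z).2 (hD z hz)] with ω hadd hz_nonneg hpos
    exact (add_pos_of_nonneg_of_pos hz_nonneg hpos).trans_eq hadd.symm
  have hmeas (y : Lp ℝ 2 μ) : MeasurableSet {ω | 0 < y ω} :=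
    measurableSet_lt measurable_const (Lp.stronglyMeasurable y).measurable
  have hle : μ {ω | 0 < (z + v) ω} ≤ μ {ω | 0 < z ω} :=
    (le_sSup (Set.mem_image_of_mem _ (add_mem hz hv))).trans hsSup
  exact hvz.trans (ae_eq_of_ae_subset_of_measure_ge hzv hle (hmeas z).nullMeasurableSet
    (measure_ne_top μ _)).symm.le

end MaximalSupport

variable [IsFiniteMeasure μ]

lemma nonneg_of_mem_innerDual_dominatingCone (hc : DominatedClosed μ V) {z : Lp ℝ 2 μ}
    (hz : z ∈ ProperCone.innerDual (dominatingCone hc : Set (Lp ℝ 2 μ))) : 0 ≤ z := by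
  refine (Lp.coeFn_nonneg z).1 (ae_nonneg_of_forall_setIntegral_nonneg
    ((Lp.memLp z).integrable one_le_two) fun A hA hμA => ?_)
  rw [← L2.inner_indicatorConstLp_one (𝕜 := ℝ) hA hμA.ne]
  refine ProperCone.mem_innerDual.1 hz (mem_dominatingCone.2 ⟨0, V.zero_mem, ?_⟩)
  filter_upwards [indicatorConstLp_coeFn (p := 2) (hs := hA) (hμs := hμA.ne) (c := (1 : ℝ))]
    with ω hω
  rw [hω]
  exact Set.indicator_nonneg (fun _ _ => zero_le_one) ω

lemma exists_mem_innerDual_setIntegral_pos (hc : DominatedClosed μ V) (hNA : NoArb μ V)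
    {A : Set Ω} (hA : MeasurableSet A) (hμA : μ A ≠ 0) :
    ∃ z ∈ ProperCone.innerDual (dominatingCone hc : Set (Lp ℝ 2 μ)), 0 < ∫ ω in A, z ω ∂μ := by
  let χ : Lp ℝ 2 μ := indicatorConstLp 2 hA (measure_ne_top μ A) 1
  have hχ : χ =ᵐ[μ] A.indicator fun _ => 1 := indicatorConstLp_coeFn
  have hχ_notMem : -χ ∉ dominatingCone hc := by
    rintro ⟨k, hk, hkχ⟩
    have hχk : A.indicator (fun _ => (1 : ℝ)) ≤ᵐ[μ] -k := by
      filter_upwards [hkχ, hχ, Lp.coeFn_neg χ] with ω hkω hχω hneg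
      rw [hneg, Pi.neg_apply, hχω] at hkω
      exact le_neg.1 hkω
    have hk_zero := hNA (-k) (V.neg_mem hk) (hχk.mono fun ω hω =>
      (Set.indicator_nonneg (fun _ _ => zero_le_one) ω).trans hω)
    refine hμA (measure_eq_zero_iff_ae_notMem.2 ?_)
    filter_upwards [hχk, hk_zero] with ω hω hω_zero hωA
    rw [hω_zero, Set.indicator_of_mem hωA] at hω
    exact zero_lt_one.not_ge hω
  obtain ⟨z, hz, hχz⟩ := ProperCone.hyperplane_separation' _ hχ_notMem
  rw [inner_neg_left, L2.inner_indicatorConstLp_one, neg_lt_zero] at hχz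
  exact ⟨z, ProperCone.mem_innerDual.2 fun x hx => hz x hx, hχz⟩

/-- Kreps–Yan: by `exists_mem_innerDual_setIntegral_pos`, an element of the dual cone with maximal
support cannot vanish on a non-null set. -/
theorem exists_pos_integral_mul_eq_zero (hc : DominatedClosed μ V) (hNA : NoArb μ V) :
    ∃ z : Lp ℝ 2 μ, (∀ᵐ ω ∂μ, 0 < z ω) ∧ ∀ k ∈ V, MemLp k 2 μ → ∫ ω, z ω * k ω ∂μ = 0 := by
  obtain ⟨z, hz, hmax⟩ := exists_mem_cone_maximal_support
    fun z => nonneg_of_mem_innerDual_dominatingCone hc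
  refine ⟨z, ?_, fun k hk hk2 => ?_⟩
  · have hmeas : MeasurableSet {ω | 0 < z ω}ᶜ :=
      (measurableSet_lt measurable_const (Lp.stronglyMeasurable z).measurable).compl
    by_contra hpos
    obtain ⟨w, hw, hw_pos⟩ := exists_mem_innerDual_setIntegral_pos hc hNA hmeas hpos
    refine hw_pos.not_ge (setIntegral_nonpos_ae hmeas ?_)
    filter_upwards [hmax w hw] with ω hω hzω
    exact not_lt.1 fun hwω => hzω (hω hwω)
  · have hinner (c : Lp ℝ 2 μ) : inner ℝ c z = ∫ ω, z ω * c ω ∂μ := by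
      rw [L2.inner_def]
      rfl
    have hdual {l : Ω → ℝ} (hl : l ∈ V) (hl2 : MemLp l 2 μ) : 0 ≤ ∫ ω, z ω * l ω ∂μ := by
      refine (ProperCone.mem_innerDual.1 hz (mem_dominatingCone.2
        ⟨l, hl, hl2.coeFn_toLp.symm.le⟩)).trans_eq ((hinner _).trans (integral_congr_ae ?_))
      filter_upwards [hl2.coeFn_toLp] with ω hω
      rw [hω]
    have hneg := hdual (V.neg_mem hk) hk2.neg
    simp only [Pi.neg_apply, mul_neg, integral_neg, Left.nonneg_neg_iff] at hneg
    exact le_antisymm hneg (hdual hk hk2)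

/-- The density `z` of `exists_pos_integral_mul_eq_zero` is square integrable, so all of `L²(μ)`
becomes integrable. -/
theorem exists_measure_integral_eq_zero (hc : DominatedClosed μ V) (hNA : NoArb μ V) :
    ∃ ρ : Measure Ω, IsFiniteMeasure ρ ∧ ρ ≪ μ ∧ μ ≪ ρ ∧
      (∀ g : Ω → ℝ, MemLp g 2 μ → Integrable g ρ) ∧
      ∀ k ∈ V, MemLp k 2 μ → ∫ ω, k ω ∂ρ = 0 := by
  obtain ⟨z, hpos, hz⟩ := exists_pos_integral_mul_eq_zero hc hNA
  have hz_meas : Measurable z := (Lp.stronglyMeasurable z).measurable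
  have hz_int : Integrable z μ := (Lp.memLp z).integrable one_le_two
  have htop : ∀ᵐ ω ∂μ, ENNReal.ofReal (z ω) < ∞ := Eventually.of_forall fun _ => by simp
  have hsmul (g : Ω → ℝ) :
      (fun ω => (ENNReal.ofReal (z ω)).toReal • g ω) =ᵐ[μ] fun ω => z ω * g ω := by
    filter_upwards [hpos] with ω hω
    rw [ENNReal.toReal_ofReal hω.le, smul_eq_mul]
  refine ⟨μ.withDensity fun ω => ENNReal.ofReal (z ω),
    isFiniteMeasure_withDensity_ofReal hz_int.2, withDensity_absolutelyContinuous _ _,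
    withDensity_absolutelyContinuous' hz_meas.ennreal_ofReal.aemeasurable ?_,
    fun g hg => ?_, fun k hk hk2 => ?_⟩
  · filter_upwards [hpos] with ω hω
    simpa using hω
  · rw [integrable_withDensity_iff_integrable_smul' hz_meas.ennreal_ofReal htop,
      integrable_congr (hsmul g)]
    exact (Lp.memLp z).integrable_mul hg
  · rw [integral_withDensity_eq_integral_toReal_smul hz_meas.ennreal_ofReal htop,
      integral_congr_ae (hsmul k), hz k hk hk2]

end KrepsYan

section EquivalentMeasure

open scoped ENNReal

variable [MeasurableSpace Ω] {μ ν : Measure Ω} {V : Submodule ℝ (Ω → ℝ)} {p : ℝ≥0∞}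

lemma NoArb.of_equivalent (hNA : NoArb μ V) (hμν : μ ≪ ν) (hνμ : ν ≪ μ) : NoArb ν V :=
  fun k hk hk_nonneg => hνμ.ae_eq (hNA k hk (hμν.ae_le hk_nonneg))

lemma exists_le_measure_memLp [IsFiniteMeasure μ] (hp : p ≠ 0) (hp_top : p ≠ ∞) {g : Ω → ℝ}
    (hg : Measurable g) : ∃ ν ≤ μ, μ ≪ ν ∧ MemLp g p ν := by
  let d : Ω → ℝ≥0∞ := fun ω => 1 + ‖g ω‖ₑ ^ p.toReal
  have hd : Measurable d := (hg.enorm.pow_const _).const_add 1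
  refine ⟨μ.withDensity d⁻¹, ?_, withDensity_absolutelyContinuous' hd.inv.aemeasurable ?_,
    hg.aestronglyMeasurable, ?_⟩
  · refine (withDensity_mono (Eventually.of_forall fun ω => ?_)).trans_eq withDensity_one
    exact ENNReal.inv_le_one.2 le_self_add
  · refine Eventually.of_forall fun ω => ENNReal.inv_ne_zero.2 ?_
    simp [d, ENNReal.rpow_eq_top_iff]
  · rw [eLpNorm_lt_top_iff_lintegral_rpow_enorm_lt_top hp hp_top,
      lintegral_withDensity_eq_lintegral_mul _ hd.inv (hg.enorm.pow_const _)]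
    refine (lintegral_mono fun ω => ?_).trans_lt ((lintegral_one (μ := μ)).trans_lt
      (measure_lt_top μ _))
    exact (mul_comm _ _).trans_le (ENNReal.div_le_of_le_mul (by simp [d]))

lemma exists_le_measure_forall_memLp [IsFiniteMeasure μ] (hp : p ≠ 0) (hp_top : p ≠ ∞)
    {G : Set (Ω → ℝ)} (hG : G.Finite) (hmeas : ∀ g ∈ G, Measurable g) :
    ∃ ν ≤ μ, μ ≪ ν ∧ ∀ g ∈ G, MemLp g p ν := by
  induction G, hG using Set.Finite.induction_on with
  | empty => exact ⟨μ, le_rfl, .rfl, by simp⟩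
  | @insert g G _ _ ih =>
    obtain ⟨ν, hνμ, hμν, hν⟩ := ih fun f hf => hmeas f (Set.mem_insert_of_mem g hf)
    have : IsFiniteMeasure ν := isFiniteMeasure_of_le μ hνμ
    obtain ⟨ρ, hρν, hνρ, hρ⟩ :=
      exists_le_measure_memLp (μ := ν) hp hp_top (hmeas g (Set.mem_insert g G))
    exact ⟨ρ, hρν.trans hνμ, hμν.trans hνρ,
      Set.forall_mem_insert.2 ⟨hρ, fun f hf => (hν f hf).mono_measure hρν⟩⟩

end EquivalentMeasure

section Gains

variable {A : Type*} [Fintype A] {𝒢 : ℕ → MeasurableSpace Ω} {T : ℕ} {S : A → ℕ → Ω → ℝ}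

/-- Terminal gains from predictable trading in finitely many assets `S` up to date `T`. The
position held over `(t, t + 1]` is indexed by `t` and is `𝒢 t`-measurable. -/
def gains (𝒢 : ℕ → MeasurableSpace Ω) (T : ℕ) (S : A → ℕ → Ω → ℝ) : Submodule ℝ (Ω → ℝ) :=
  ⨆ p ∈ Finset.univ ×ˢ Finset.range T,
    measurableMultiples (𝒢 p.2) (S p.1 (p.2 + 1) - S p.1 p.2)

lemma mul_increment_mem_gains {t : ℕ} (ht : t < T) (a : A) {h : Ω → ℝ} (hh : Measurable[𝒢 t] h) :
    h * (S a (t + 1) - S a t) ∈ gains 𝒢 T S :=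
  Submodule.mem_iSup_of_mem (a, t) (Submodule.mem_iSup_of_mem (by simpa using ht) ⟨h, hh, rfl⟩)

lemma mem_gains_iff {k : Ω → ℝ} :
    k ∈ gains 𝒢 T S ↔ ∃ H : A → ℕ → Ω → ℝ, (∀ a, ∀ t < T, Measurable[𝒢 t] (H a t)) ∧
      k = ∑ t ∈ Finset.range T, ∑ a, H a t * (S a (t + 1) - S a t) := by
  constructor
  · intro hk
    obtain ⟨g, rfl⟩ := (Submodule.mem_iSup_finset_iff_exists_sum _ _).1 hk
    choose h hh hg using fun p => (g p).2
    exact ⟨fun a t => h (a, t), fun a t _ => hh (a, t),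
      (Finset.sum_congr rfl fun p _ => hg p).trans (Finset.sum_product_right _ _ _)⟩
  · rintro ⟨H, hH, rfl⟩
    exact Submodule.sum_mem _ fun t ht => Submodule.sum_mem _ fun a _ =>
      mul_increment_mem_gains (Finset.mem_range.1 ht) a (hH a t (Finset.mem_range.1 ht))

lemma indicator_increment_mem_gains {t : ℕ} (ht : t < T) (a : A) {B : Set Ω}
    (hB : MeasurableSet[𝒢 t] B) : B.indicator (S a (t + 1) - S a t) ∈ gains 𝒢 T S := by
  have hmul : B.indicator (S a (t + 1) - S a t) = B.indicator 1 * (S a (t + 1) - S a t) := by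
    ext ω
    by_cases hω : ω ∈ B <;> simp [hω]
  rw [hmul]
  exact mul_increment_mem_gains ht a (Measurable.indicator measurable_const hB)

lemma measurable_of_mem_gains (h𝒢 : Monotone 𝒢) (hS : ∀ a, ∀ t ≤ T, Measurable[𝒢 t] (S a t))
    {k : Ω → ℝ} (hk : k ∈ gains 𝒢 T S) : Measurable[𝒢 T] k := by
  obtain ⟨H, hH, rfl⟩ := mem_gains_iff.1 hk
  refine Finset.sum_induction _ Measurable[𝒢 T] (fun _ _ => Measurable.add) measurable_const
    fun t ht => Finset.sum_induction _ Measurable[𝒢 T] (fun _ _ => Measurable.add)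
      measurable_const fun a _ => ?_
  have htT := Finset.mem_range.1 ht
  exact ((hH a t htT).mono (h𝒢 htT.le) le_rfl).mul
    (((hS a _ htT).mono (h𝒢 htT) le_rfl).sub ((hS a t htT.le).mono (h𝒢 htT.le) le_rfl))

lemma dominatedClosed_gains_sup [MeasurableSpace Ω] {μ : Measure Ω} (h𝒢 : Monotone 𝒢)
    {E : Submodule ℝ (Ω → ℝ)} (hE : E.FG) (hNA : NoArb μ (gains 𝒢 T S ⊔ E)) :
    DominatedClosed μ (gains 𝒢 T S ⊔ E) :=
  (dominatedClosed_biSup_measurableMultiples h𝒢 Prod.snd _ _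
    (hNA.mono le_sup_left)).sup_of_fg hE hNA

end Gains

section MartingaleMeasure

open scoped ENNReal

variable [m₀ : MeasurableSpace Ω] {𝒢 : ℕ → MeasurableSpace Ω} {T : ℕ}

/-- The martingale property on the finite time set `{0, …, T}`. -/
def MartingaleUpTo (𝒢 : ℕ → MeasurableSpace Ω) (T : ℕ) (X : ℕ → Ω → ℝ) (Q : Measure Ω) : Prop :=
  (∀ t, t ≤ T → Integrable (X t) Q) ∧ ∀ s t, s ≤ t → t ≤ T → X s =ᵐ[Q] Q[X t | 𝒢 s]

/-- Finite measures equivalent to `P` under which all assets are martingales; normalization to a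
probability measure is left to the end. -/
structure IsMartingaleMeasure {A : Type*} (P : Measure Ω) (𝒢 : ℕ → MeasurableSpace Ω) (T : ℕ)
    (S : A → ℕ → Ω → ℝ) (Q : Measure Ω) : Prop where
  isFiniteMeasure : IsFiniteMeasure Q
  absolutelyContinuous : Q ≪ P
  absolutelyContinuous' : P ≪ Q
  martingaleUpTo (a : A) : MartingaleUpTo 𝒢 T (S a) Q

lemma martingaleUpTo_of_setIntegral_increment_eq_zero {Q : Measure Ω} [IsFiniteMeasure Q]
    (h𝒢 : Monotone 𝒢) (h𝒢_le : ∀ t, 𝒢 t ≤ m₀) {X : ℕ → Ω → ℝ}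
    (hX : ∀ t ≤ T, Measurable[𝒢 t] (X t)) (hint : ∀ t ≤ T, Integrable (X t) Q)
    (hincr : ∀ t < T, ∀ B, MeasurableSet[𝒢 t] B → ∫ ω in B, (X (t + 1) - X t) ω ∂Q = 0) :
    MartingaleUpTo 𝒢 T X Q := by
  refine ⟨hint, fun s t hst htT => ?_⟩
  refine ae_eq_condExp_of_forall_setIntegral_eq (h𝒢_le s) (hint t htT)
    (fun _ _ _ => (hint s (hst.trans htT)).integrableOn) (fun B hB _ => ?_)
    (hX s (hst.trans htT)).stronglyMeasurable.aestronglyMeasurable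
  induction t, hst using Nat.le_induction with
  | base => rfl
  | succ t hst ih =>
    have hzero := hincr t htT B (h𝒢 hst B hB)
    rw [integral_sub' (hint _ htT).integrableOn (hint t (Nat.le_of_lt htT)).integrableOn,
      sub_eq_zero] at hzero
    rw [hzero, ih (Nat.le_of_lt htT)]

variable {A : Type*} [Fintype A] {S : A → ℕ → Ω → ℝ} {E : Submodule ℝ (Ω → ℝ)} {φ : Ω → ℝ}
  {μ : Measure Ω} [IsFiniteMeasure μ]

lemma exists_isMartingaleMeasure_of_memLp (h𝒢 : Monotone 𝒢) (h𝒢_le : ∀ t, 𝒢 t ≤ m₀)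
    (hS : ∀ a, ∀ t ≤ T, Measurable[𝒢 t] (S a t)) (hS_memLp : ∀ a, ∀ t ≤ T, MemLp (S a t) 2 μ)
    (hE : E.FG) (hE_memLp : ∀ e ∈ E, MemLp e 2 μ) (hNA : NoArb μ (gains 𝒢 T S ⊔ E)) :
    ∃ ρ : Measure Ω, IsMartingaleMeasure μ 𝒢 T S ρ ∧
      (∀ g : Ω → ℝ, MemLp g 2 μ → Integrable g ρ) ∧ ∀ e ∈ E, ∫ ω, e ω ∂ρ = 0 := by
  obtain ⟨ρ, hρ, hρμ, hμρ, hint, hzero⟩ :=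
    exists_measure_integral_eq_zero (dominatedClosed_gains_sup h𝒢 hE hNA) hNA
  refine ⟨ρ, ⟨hρ, hρμ, hμρ, fun a => ?_⟩, hint,
    fun e he => hzero e (Submodule.mem_sup_right he) (hE_memLp e he)⟩
  refine martingaleUpTo_of_setIntegral_increment_eq_zero h𝒢 h𝒢_le (hS a)
    (fun t ht => hint _ (hS_memLp a t ht)) fun t ht B hB => ?_
  rw [← integral_indicator (h𝒢_le t B hB)]
  exact hzero _ (Submodule.mem_sup_left (indicator_increment_mem_gains ht a hB))
    (((hS_memLp a _ ht).sub (hS_memLp a t ht.le)).indicator (h𝒢_le t B hB))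

lemma memLp_of_mem_span {ν : Measure Ω} {p : ℝ≥0∞} {G : Set (Ω → ℝ)}
    (hG : ∀ g ∈ G, MemLp g p ν) {e : Ω → ℝ} (he : e ∈ Submodule.span ℝ G) : MemLp e p ν := by
  induction he using Submodule.span_induction with
  | mem g hg => exact hG g hg
  | zero => exact MemLp.zero
  | add g h _ _ hg hh => exact hg.add hh
  | smul c g _ hg => exact hg.const_smul c

/-- The Dalang–Morton–Willinger theorem, with an additional finite dimensional space `E` of
claims available at price zero. -/
theorem exists_isMartingaleMeasure_of_noArb (h𝒢 : Monotone 𝒢) (h𝒢_le : ∀ t, 𝒢 t ≤ m₀)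
    (hS : ∀ a, ∀ t ≤ T, Measurable[𝒢 t] (S a t)) (hE : E.FG)
    (hE_meas : ∀ e ∈ E, Measurable e) (hφ : Measurable φ)
    (hNA : NoArb μ (gains 𝒢 T S ⊔ E)) :
    ∃ ρ : Measure Ω, IsMartingaleMeasure μ 𝒢 T S ρ ∧ Integrable φ ρ ∧
      ∀ e ∈ E, Integrable e ρ ∧ ∫ ω, e ω ∂ρ = 0 := by
  obtain ⟨G, hG⟩ := id hE
  let 𝒮 : Set (Ω → ℝ) := ⋃ a, S a '' Set.Iic T
  have h𝒮_fin : 𝒮.Finite := Set.finite_iUnion fun a => (Set.finite_Iic T).image _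
  obtain ⟨ν, hνμ, hμν, hν⟩ := exists_le_measure_forall_memLp (μ := μ) (p := 2)
    (G := insert φ (𝒮 ∪ G)) two_ne_zero ENNReal.ofNat_ne_top
    ((h𝒮_fin.union G.finite_toSet).insert φ) <| by
      rintro g (rfl | hg | hg)
      · exact hφ
      · obtain ⟨a, t, ht, rfl⟩ := Set.mem_iUnion.1 hg
        exact (hS a t ht).mono (h𝒢_le t) le_rfl
      · exact hE_meas g (hG ▸ Submodule.subset_span hg)
  have : IsFiniteMeasure ν := isFiniteMeasure_of_le μ hνμ
  have hE_memLp (e : Ω → ℝ) (he : e ∈ E) : MemLp e 2 ν :=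
    memLp_of_mem_span (fun g hg => hν g (.inr (.inr hg))) (hG ▸ he)
  obtain ⟨ρ, ⟨hρ, hρν, hνρ, hmart⟩, hint, hzero⟩ := exists_isMartingaleMeasure_of_memLp h𝒢 h𝒢_le hS
    (fun a t ht => hν _ (.inr (.inl (Set.mem_iUnion.2 ⟨a, t, ht, rfl⟩)))) hE hE_memLp
    (hNA.of_equivalent hμν hνμ.absolutelyContinuous)
  exact ⟨ρ, ⟨hρ, hρν.trans hνμ.absolutelyContinuous, hμν.trans hνρ, hmart⟩,
    hint φ (hν φ (Set.mem_insert _ _)), fun e he => ⟨hint e (hE_memLp e he), hzero e he⟩⟩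

end MartingaleMeasure

section LocallyCentered

variable {m m₀ : MeasurableSpace Ω} {Q : Measure Ω} {W Y U : Ω → ℝ}

/-- `W` has generalized conditional expectation zero given `m`: it is integrable with vanishing
conditional expectation on each of the `m`-measurable sets `E n`, which exhaust `Ω`. Gains over
one period have this property although they need not be integrable. -/
def LocallyCentered (m : MeasurableSpace Ω) [MeasurableSpace Ω] (Q : Measure Ω)
    (W : Ω → ℝ) : Prop :=
  ∃ E : ℕ → Set Ω, (∀ n, MeasurableSet[m] (E n)) ∧ (∀ ω, ∀ᶠ n in atTop, ω ∈ E n) ∧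
    ∀ n, Integrable ((E n).indicator W) Q ∧ Q[(E n).indicator W | m] =ᵐ[Q] 0

lemma eventually_abs_le_natCast (x : ℝ) : ∀ᶠ n : ℕ in atTop, |x| ≤ n :=
  tendsto_natCast_atTop_atTop.eventually_ge_atTop |x|

variable [IsFiniteMeasure Q]

lemma locallyCentered_sum_mul {A : Type*} [Fintype A] {H ξ : A → Ω → ℝ} (hm : m ≤ m₀)
    (hH : ∀ a, Measurable[m] (H a)) (hξ : ∀ a, Integrable (ξ a) Q)
    (hξ_zero : ∀ a, Q[ξ a | m] =ᵐ[Q] 0) : LocallyCentered m Q (∑ a, H a * ξ a) := by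
  let E : ℕ → Set Ω := fun n => ⋂ a, {ω | |H a ω| ≤ n}
  have hE (n : ℕ) : MeasurableSet[m] (E n) :=
    MeasurableSet.iInter fun a => measurable_id.abs.comp (hH a) measurableSet_Iic
  have hbound (n : ℕ) (a : A) (ω : Ω) : ‖(E n).indicator (H a) ω‖ ≤ n := by
    by_cases hω : ω ∈ E n
    · simpa [hω] using Set.mem_iInter.1 hω a
    · simp [hω]
  have hmeas (n : ℕ) (a : A) : StronglyMeasurable[m] ((E n).indicator (H a)) :=
    (hH a).stronglyMeasurable.indicator (hE n)
  have hsum (n : ℕ) :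
      (E n).indicator (∑ a, H a * ξ a) = ∑ a, (E n).indicator (H a) * ξ a := by
    ext ω
    by_cases hω : ω ∈ E n <;> simp [hω]
  have hint (n : ℕ) (a : A) : Integrable ((E n).indicator (H a) * ξ a) Q :=
    (hξ a).bdd_mul ((hmeas n a).mono hm).aestronglyMeasurable
      (Eventually.of_forall (hbound n a))
  refine ⟨E, hE, fun ω => ?_, fun n => ?_⟩
  · filter_upwards [eventually_all.2 fun a => eventually_abs_le_natCast (H a ω)] with n hn
    exact Set.mem_iInter.2 hn
  · rw [hsum]
    refine ⟨integrable_finsetSum' _ fun a _ => hint n a, ?_⟩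
    have hterm (a : A) : Q[(E n).indicator (H a) * ξ a | m] =ᵐ[Q] 0 := by
      filter_upwards [condExp_stronglyMeasurable_mul_of_bound hm (hmeas n a) (hξ a) n
        (Eventually.of_forall (hbound n a)), hξ_zero a] with ω hpull hzero
      rw [hpull, Pi.mul_apply, hzero, Pi.zero_apply, mul_zero]
    filter_upwards [condExp_finsetSum (fun a _ => hint n a) m, ae_all_iff.2 hterm]
      with ω hω hterm
    rw [hω, Finset.sum_apply, Finset.sum_eq_zero fun a _ => hterm a, Pi.zero_apply]

lemma LocallyCentered.integrable_and_integral_eq_zero (hm : m ≤ m₀) (hW : LocallyCentered m Q W)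
    (hY : Integrable Y Q) (hWY : 0 ≤ᵐ[Q] W + Y) : Integrable W Q ∧ ∫ ω, W ω ∂Q = 0 := by
  obtain ⟨E, hE, hE_mem, hE_zero⟩ := hW
  have hcover : AECover Q atTop E :=
    ⟨Eventually.of_forall hE_mem, fun n => hm _ (hE n)⟩
  have hWE (n : ℕ) : IntegrableOn W (E n) Q :=
    (integrable_indicator_iff (hm _ (hE n))).1 (hE_zero n).1
  have hWE_zero (n : ℕ) : ∫ ω in E n, W ω ∂Q = 0 := by
    rw [← integral_indicator (hm _ (hE n)), ← integral_condExp hm, integral_congr_ae (hE_zero n).2]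
    exact integral_zero _ _
  have hlim : Tendsto (fun n => ∫ ω in E n, (W + Y) ω ∂Q) atTop (𝓝 (∫ ω, Y ω ∂Q)) := by
    refine (hcover.integral_tendsto_of_countably_generated hY).congr fun n => ?_
    rw [integral_add' (hWE n) hY.integrableOn, hWE_zero, zero_add]
  have hWEY (n : ℕ) : IntegrableOn (W + Y) (E n) Q := (hWE n).add hY.integrableOn
  have hWY_int := hcover.integrable_of_integral_tendsto_of_nonneg_ae _ hWEY hWY hlim
  have hW_int : Integrable W Q := by simpa using hWY_int.sub hY
  have hWY_zero := hcover.integral_eq_of_tendsto_of_nonneg_ae _ hWY hWEY hlim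
  rw [integral_add' hW_int hY, add_eq_right] at hWY_zero
  exact ⟨hW_int, hWY_zero⟩

lemma LocallyCentered.condExp_nonneg_of_nonneg (hm : m ≤ m₀) (hW : LocallyCentered m Q W)
    (hU : Measurable[m] U) (hY : Integrable Y Q) (hUWY : 0 ≤ᵐ[Q] U + W + Y) :
    0 ≤ᵐ[Q] U + Q[Y | m] := by
  obtain ⟨E, hE, hE_mem, hE_zero⟩ := hW
  let C : ℕ → Set Ω := fun n => {ω | |U ω| ≤ n}
  have hC (n : ℕ) : MeasurableSet[m] (C n) := measurable_id.abs.comp hU measurableSet_Iic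
  have hCE (n : ℕ) : MeasurableSet[m] (C n ∩ E n) := (hC n).inter (hE n)
  have hU_meas (n : ℕ) : StronglyMeasurable[m] ((C n ∩ E n).indicator U) :=
    hU.stronglyMeasurable.indicator (hCE n)
  have hU_int (n : ℕ) : Integrable ((C n ∩ E n).indicator U) Q := by
    refine .of_bound ((hU_meas n).mono hm).aestronglyMeasurable n (Eventually.of_forall fun ω => ?_)
    by_cases hω : ω ∈ C n ∩ E n
    · rw [Set.indicator_of_mem hω]
      exact hω.1
    · simp [hω]
  have hlocal (n : ℕ) : 0 ≤ᵐ[Q] (C n ∩ E n).indicator (U + Q[Y | m]) := by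
    have hsplit : (C n ∩ E n).indicator (U + W + Y) = (C n ∩ E n).indicator U +
        (C n).indicator ((E n).indicator W) + (C n ∩ E n).indicator Y := by
      simp only [Set.indicator_add', Set.indicator_indicator]
    have hW_int := (hE_zero n).1.indicator (hm _ (hC n))
    have hY_int := hY.indicator (hm _ (hCE n))
    have hnonneg : 0 ≤ᵐ[Q] Q[(C n ∩ E n).indicator (U + W + Y) | m] :=
      condExp_nonneg (hUWY.mono fun ω hω => Set.indicator_apply_nonneg fun _ => hω)
    rw [hsplit] at hnonneg
    filter_upwards [hnonneg, condExp_add ((hU_int n).add hW_int) hY_int m,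
      condExp_add (hU_int n) hW_int m, condExp_indicator (hE_zero n).1 (hC n), (hE_zero n).2,
      condExp_indicator hY (hCE n)] with ω hnonneg hadd hadd' hCW hEW hCEY
    rw [hadd, Pi.add_apply, hadd', Pi.add_apply, hCW, Set.indicator_apply, hEW, hCEY,
      condExp_of_stronglyMeasurable hm (hU_meas n) (hU_int n)] at hnonneg
    simpa [Set.indicator_add'] using hnonneg
  filter_upwards [ae_all_iff.2 hlocal] with ω hω
  obtain ⟨n, hCn, hEn⟩ := ((eventually_abs_le_natCast (U ω)).and (hE_mem ω)).exists
  simpa [Set.indicator_of_mem (show ω ∈ C n ∩ E n from ⟨hCn, hEn⟩)] using hω n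

end LocallyCentered

section IntegralGains

variable [m₀ : MeasurableSpace Ω] {A : Type*} [Fintype A] {𝒢 : ℕ → MeasurableSpace Ω} {T : ℕ}
  {S : A → ℕ → Ω → ℝ} {Q : Measure Ω}

lemma MartingaleUpTo.mono {X : ℕ → Ω → ℝ} {T' : ℕ} (hX : MartingaleUpTo 𝒢 T X Q) (hT : T' ≤ T) :
    MartingaleUpTo 𝒢 T' X Q :=
  ⟨fun t ht => hX.1 t (ht.trans hT), fun s t hst ht => hX.2 s t hst (ht.trans hT)⟩

lemma MartingaleUpTo.condExp_increment {X : ℕ → Ω → ℝ} (hX : MartingaleUpTo 𝒢 T X Q) {t : ℕ}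
    (ht : t < T) : Q[X (t + 1) - X t | 𝒢 t] =ᵐ[Q] 0 := by
  filter_upwards [condExp_sub (hX.1 (t + 1) ht) (hX.1 t ht.le) (𝒢 t),
    hX.2 t (t + 1) t.le_succ ht, hX.2 t t le_rfl ht.le] with ω hsub hsucc hself
  rw [hsub, Pi.sub_apply, ← hsucc, ← hself, sub_self, Pi.zero_apply]

/-- Backward induction: conditioning on `𝒢 T` bounds the gains up to `T` from below, so they are
integrable; then the gain over the last period is bounded from below as well. -/
theorem integrable_gains_and_integral_eq_zero [IsFiniteMeasure Q] (h𝒢 : Monotone 𝒢)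
    (h𝒢_le : ∀ t, 𝒢 t ≤ m₀) (hS : ∀ a, ∀ t ≤ T, Measurable[𝒢 t] (S a t))
    (hmart : ∀ a, MartingaleUpTo 𝒢 T (S a) Q) {k Y : Ω → ℝ} (hk : k ∈ gains 𝒢 T S)
    (hY : Integrable Y Q) (hkY : 0 ≤ᵐ[Q] k + Y) : Integrable k Q ∧ ∫ ω, k ω ∂Q = 0 := by
  obtain ⟨H, hH, rfl⟩ := mem_gains_iff.1 hk
  clear hk
  induction T generalizing Y with
  | zero => simp
  | succ T ih =>
    have hS' (a : A) (t : ℕ) (ht : t ≤ T) : Measurable[𝒢 t] (S a t) := hS a t (ht.trans T.le_succ)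
    have hH' (a : A) (t : ℕ) (ht : t < T) : Measurable[𝒢 t] (H a t) :=
      hH a t (ht.trans T.lt_succ_self)
    rw [Finset.sum_range_succ] at hkY ⊢
    set U := ∑ t ∈ Finset.range T, ∑ a, H a t * (S a (t + 1) - S a t) with hU
    have hU_meas : Measurable[𝒢 T] U :=
      measurable_of_mem_gains h𝒢 hS' (mem_gains_iff.2 ⟨H, hH', hU⟩)
    have hW : LocallyCentered (𝒢 T) Q (∑ a, H a T * (S a (T + 1) - S a T)) :=
      locallyCentered_sum_mul (h𝒢_le T) (fun a => hH a T T.lt_succ_self)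
        (fun a => ((hmart a).1 _ le_rfl).sub ((hmart a).1 T T.le_succ))
        (fun a => (hmart a).condExp_increment T.lt_succ_self)
    obtain ⟨hU_int, hU_zero⟩ := ih hS' (fun a => (hmart a).mono T.le_succ) integrable_condExp
      hH' (hW.condExp_nonneg_of_nonneg (h𝒢_le T) hU_meas hY hkY)
    obtain ⟨hW_int, hW_zero⟩ := hW.integrable_and_integral_eq_zero (h𝒢_le T) (hU_int.add hY) <| by
      rwa [← add_assoc, add_comm _ U]
    refine ⟨hU_int.add hW_int, ?_⟩
    rw [integral_add' hU_int hW_int, hU_zero, hW_zero, add_zero]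

end IntegralGains

section MartingaleIntegrals

open scoped ENNReal

variable [m₀ : MeasurableSpace Ω] {𝒢 : ℕ → MeasurableSpace Ω} {T : ℕ} {X : ℕ → Ω → ℝ}
  {Q : Measure Ω} [IsFiniteMeasure Q]

lemma MartingaleUpTo.setIntegral_eq (h𝒢_le : ∀ t, 𝒢 t ≤ m₀) (hX : MartingaleUpTo 𝒢 T X Q)
    {s t : ℕ} (hst : s ≤ t) (ht : t ≤ T) {B : Set Ω} (hB : MeasurableSet[𝒢 s] B) :
    ∫ ω in B, X s ω ∂Q = ∫ ω in B, X t ω ∂Q := by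
  rw [setIntegral_congr_ae (h𝒢_le s B hB) ((hX.2 s t hst ht).mono fun ω hω _ => hω),
    setIntegral_condExp (h𝒢_le s) (hX.1 t ht) hB]

lemma MartingaleUpTo.integral_eq (h𝒢_le : ∀ t, 𝒢 t ≤ m₀) (hX : MartingaleUpTo 𝒢 T X Q) {s t : ℕ}
    (hst : s ≤ t) (ht : t ≤ T) : ∫ ω, X s ω ∂Q = ∫ ω, X t ω ∂Q := by
  simpa using hX.setIntegral_eq h𝒢_le hst ht MeasurableSet.univ

lemma condExp_smul_measure {m : MeasurableSpace Ω} (hm : m ≤ m₀) {c : ℝ≥0∞} (hc : c ≠ ∞)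
    {g : Ω → ℝ} (hg : Integrable g Q) : (c • Q)[g | m] =ᵐ[c • Q] Q[g | m] := by
  have := Measure.smul_finite Q hc
  refine (ae_eq_condExp_of_forall_setIntegral_eq hm (hg.smul_measure hc)
    (fun _ _ _ => (integrable_condExp.smul_measure hc).integrableOn) (fun B hB _ => ?_)
    stronglyMeasurable_condExp.aestronglyMeasurable).symm
  simp only [Measure.restrict_smul, integral_smul_measure, setIntegral_condExp hm hg hB]

lemma MartingaleUpTo.smul_measure (h𝒢_le : ∀ t, 𝒢 t ≤ m₀) (hX : MartingaleUpTo 𝒢 T X Q)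
    {c : ℝ≥0∞} (hc : c ≠ ∞) : MartingaleUpTo 𝒢 T X (c • Q) :=
  ⟨fun t ht => (hX.1 t ht).smul_measure hc, fun s t hst ht =>
    (Measure.smul_absolutelyContinuous.ae_eq (hX.2 s t hst ht)).trans
      (condExp_smul_measure (h𝒢_le s) hc (hX.1 t ht)).symm⟩

end MartingaleIntegrals

section DisjointUnion

variable {ι : Type*} {α : ι → Type*} {m m' : ∀ i, MeasurableSpace (α i)} {g : Sigma α → ℝ} {i : ι}

/-- The disjoint union of a family of `σ`-algebras, which makes a family of agents with different
information into one agent. -/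
abbrev sigmaSpace (m : ∀ i, MeasurableSpace (α i)) : MeasurableSpace (Sigma α) :=
  @Sigma.instMeasurableSpace ι α m

lemma measurableSet_sigmaSpace {s : Set (Sigma α)} :
    MeasurableSet[sigmaSpace m] s ↔ ∀ i, MeasurableSet[m i] (Sigma.mk i ⁻¹' s) :=
  MeasurableSpace.measurableSet_iInf

lemma measurable_sigmaSpace :
    Measurable[sigmaSpace m] g ↔ ∀ i, Measurable[m i] fun ω => g ⟨i, ω⟩ := by
  simp only [Measurable, measurableSet_sigmaSpace]
  exact ⟨fun h i s hs => h hs i, fun h s hs i => h i hs⟩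

lemma sigmaSpace_mono (h : ∀ i, m i ≤ m' i) : sigmaSpace m ≤ sigmaSpace m' :=
  fun _ hs => measurableSet_sigmaSpace.2 fun i => h i _ (measurableSet_sigmaSpace.1 hs i)

lemma measurableSet_sigmaSpace_image_mk {B : Set (α i)} (hB : MeasurableSet[m i] B) :
    MeasurableSet[sigmaSpace m] (Sigma.mk i '' B) := by
  refine measurableSet_sigmaSpace.2 fun j => ?_
  obtain rfl | hij := eq_or_ne i j
  · rwa [Set.preimage_image_eq _ sigma_mk_injective]
  · rw [Set.preimage_image_sigmaMk_of_ne hij.symm]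
    exact @MeasurableSet.empty _ (m j)

variable {𝒢 : ∀ i, ℕ → MeasurableSpace (α i)} {T : ℕ}

lemma mem_gains_of_mem_gains_sigmaSpace {A : Type*} [Fintype A] {S : A → ℕ → Sigma α → ℝ}
    {k : Sigma α → ℝ} (hk : k ∈ gains (fun t => sigmaSpace fun i => 𝒢 i t) T S) (i : ι) :
    (fun ω => k ⟨i, ω⟩) ∈ gains (𝒢 i) T fun a t ω => S a t ⟨i, ω⟩ := by
  obtain ⟨H, hH, rfl⟩ := mem_gains_iff.1 hk
  refine mem_gains_iff.2 ⟨fun a t ω => H a t ⟨i, ω⟩,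
    fun a t ht => measurable_sigmaSpace.1 (hH a t ht) i, ?_⟩
  ext ω
  simp

variable [∀ i, MeasurableSpace (α i)]

lemma measurableEmbedding_sigmaMk (i : ι) : MeasurableEmbedding (Sigma.mk i : α i → Sigma α) where
  injective := sigma_mk_injective
  measurable _ hs := measurableSet_sigmaSpace.1 hs i
  measurableSet_image' _ hs := measurableSet_sigmaSpace_image_mk hs

/-- The disjoint union of a family of measures. -/
noncomputable def sigmaMeasure (P : ∀ i, Measure (α i)) : Measure (Sigma α) :=
  .sum fun i => (P i).map (Sigma.mk i)

/-- The restriction of a measure on a disjoint union to one component. -/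
noncomputable def slice (ρ : Measure (Sigma α)) (i : ι) : Measure (α i) := ρ.comap (Sigma.mk i)

variable {P : ∀ i, Measure (α i)} {ρ ρ' : Measure (Sigma α)}

lemma ae_sigmaMeasure [Countable ι] {p : Sigma α → Prop} :
    (∀ᵐ x ∂sigmaMeasure P, p x) ↔ ∀ i, ∀ᵐ ω ∂P i, p ⟨i, ω⟩ := by
  simp only [sigmaMeasure, Measure.ae_sum_iff, (measurableEmbedding_sigmaMk _).ae_map_iff]

instance [Finite ι] [∀ i, IsFiniteMeasure (P i)] : IsFiniteMeasure (sigmaMeasure P) := by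
  have := Fintype.ofFinite ι
  rw [sigmaMeasure, Measure.sum_fintype]
  infer_instance

instance [IsFiniteMeasure ρ] : IsFiniteMeasure (slice ρ i) :=
  inferInstanceAs (IsFiniteMeasure (ρ.comap _))

lemma slice_apply (ρ : Measure (Sigma α)) (i : ι) (B : Set (α i)) :
    slice ρ i B = ρ (Sigma.mk i '' B) :=
  (measurableEmbedding_sigmaMk i).comap_apply ρ B

lemma slice_absolutelyContinuous (h : ρ ≪ ρ') (i : ι) : slice ρ i ≪ slice ρ' i := fun B hB => by
  rw [slice_apply] at hB ⊢
  exact h hB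

lemma slice_sigmaMeasure (P : ∀ i, Measure (α i)) (i : ι) : slice (sigmaMeasure P) i = P i := by
  ext B hB
  rw [slice_apply, sigmaMeasure, Measure.sum_apply _ (measurableSet_sigmaSpace_image_mk hB),
    tsum_eq_single i fun j hij => ?_]
  · rw [(measurableEmbedding_sigmaMk i).map_apply, Set.preimage_image_eq _ sigma_mk_injective]
  · rw [(measurableEmbedding_sigmaMk j).map_apply, Set.preimage_image_sigmaMk_of_ne hij,
      measure_empty]

lemma integrable_slice (hg : Integrable g ρ) (i : ι) : Integrable (fun ω => g ⟨i, ω⟩) (slice ρ i) :=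
  (measurableEmbedding_sigmaMk i).integrableOn_range_iff_comap.1 hg.integrableOn

lemma setIntegral_slice (g : Sigma α → ℝ) (i : ι) (B : Set (α i)) :
    ∫ ω in B, g ⟨i, ω⟩ ∂slice ρ i = ∫ x in Sigma.mk i '' B, g x ∂ρ := by
  have hmk := measurableEmbedding_sigmaMk (α := α) i
  have h := hmk.setIntegral_map (μ := slice ρ i) g (Sigma.mk i '' B)
  rwa [slice, hmk.map_comap, Measure.restrict_restrict_of_subset (Set.image_subset_range _ _),
    Set.preimage_image_eq _ sigma_mk_injective, eq_comm] at h

lemma sum_integral_slice [Fintype ι] (hg : Integrable g ρ) :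
    ∑ i, ∫ ω, g ⟨i, ω⟩ ∂slice ρ i = ∫ x, g x ∂ρ := by
  have hcover : ⋃ i, Set.range (Sigma.mk i : α i → Sigma α) = Set.univ :=
    Set.eq_univ_of_forall fun x => Set.mem_iUnion.2 ⟨x.1, x.2, rfl⟩
  rw [← setIntegral_univ, ← hcover, integral_iUnion_fintype
    (fun i => (measurableEmbedding_sigmaMk i).measurableSet_range) ?_ fun i => hg.integrableOn]
  · refine Finset.sum_congr rfl fun i _ => ?_
    rw [← Set.image_univ, ← setIntegral_slice, setIntegral_univ]
  · intro i j hij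
    simpa only [Set.range_sigmaMk] using (Set.disjoint_singleton.2 hij).preimage Sigma.fst

lemma MartingaleUpTo.slice [IsFiniteMeasure ρ] (h𝒢 : ∀ i, Monotone (𝒢 i))
    (h𝒢_le : ∀ i t, 𝒢 i t ≤ ‹∀ i, MeasurableSpace (α i)› i) {X : ℕ → Sigma α → ℝ}
    (hX_meas : ∀ t ≤ T, Measurable[sigmaSpace fun i => 𝒢 i t] (X t))
    (hX : MartingaleUpTo (fun t => sigmaSpace fun i => 𝒢 i t) T X ρ) (i : ι) :
    MartingaleUpTo (𝒢 i) T (fun t ω => X t ⟨i, ω⟩) (slice ρ i) := by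
  have hint (t : ℕ) (ht : t ≤ T) := integrable_slice (hX.1 t ht) i
  refine martingaleUpTo_of_setIntegral_increment_eq_zero (h𝒢 i) (h𝒢_le i)
    (fun t ht => measurable_sigmaSpace.1 (hX_meas t ht) i) hint fun t ht B hB => ?_
  rw [integral_sub' (hint _ ht).integrableOn (hint t ht.le).integrableOn, setIntegral_slice,
    setIntegral_slice, hX.setIntegral_eq (fun t => sigmaSpace_mono fun i => h𝒢_le i t) t.le_succ ht
      (measurableSet_sigmaSpace_image_mk hB), sub_self]

end DisjointUnion

section CollectiveArbitrage

open scoped ENNReal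

lemma IsMartingaleMeasure.smul [m₀ : MeasurableSpace Ω] {A : Type*} {P Q : Measure Ω}
    {𝒢 : ℕ → MeasurableSpace Ω} {T : ℕ} {S : A → ℕ → Ω → ℝ}
    (hQ : IsMartingaleMeasure P 𝒢 T S Q) (h𝒢_le : ∀ t, 𝒢 t ≤ m₀) {c : ℝ≥0∞} (hc : c ≠ 0)
    (hc' : c ≠ ∞) : IsMartingaleMeasure P 𝒢 T S (c • Q) :=
  have := hQ.isFiniteMeasure
  { isFiniteMeasure := Measure.smul_finite Q hc'
    absolutelyContinuous := Measure.smul_absolutelyContinuous.trans hQ.absolutelyContinuous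
    absolutelyContinuous' :=
      hQ.absolutelyContinuous'.trans (Measure.absolutelyContinuous_smul hc)
    martingaleUpTo := fun a => (hQ.martingaleUpTo a).smul_measure h𝒢_le hc' }

/-- Exchanges as claims of the single agent trading on the disjoint union of copies of `Ω`. -/
def exchangeClaims {N : ℕ} (𝒴 : Submodule ℝ (Fin N → Ω → ℝ)) :
    Submodule ℝ ((_ : Fin N) × Ω → ℝ) :=
  𝒴.map (LinearEquiv.piCurry ℝ fun _ _ => ℝ).symm.toLinearMap

lemma mem_exchangeClaims {N : ℕ} {𝒴 : Submodule ℝ (Fin N → Ω → ℝ)} {e : (_ : Fin N) × Ω → ℝ} :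
    e ∈ exchangeClaims 𝒴 ↔ (fun i ω => e ⟨i, ω⟩) ∈ 𝒴 :=
  Submodule.mem_map_equiv _

variable [m₀ : MeasurableSpace Ω] {A : Type*} [Fintype A] {N T : ℕ} {P : Measure Ω}
  {F : Fin N → ℕ → MeasurableSpace Ω} {S : Fin N → A → ℕ → Ω → ℝ} {Q : Fin N → Measure Ω}

theorem NCA_of_isMartingaleMeasure (hF : ∀ i, Monotone (F i)) (hF_le : ∀ i t, F i t ≤ m₀)
    (hS : ∀ i a, ∀ t ≤ T, Measurable[F i t] (S i a t))
    (hQ : ∀ i, IsMartingaleMeasure P (F i) T (S i) (Q i)) {𝒴 : Set (Fin N → Ω → ℝ)}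
    (h𝒴_int : ∀ y ∈ 𝒴, ∀ i, Integrable (y i) (Q i))
    (h𝒴_le : ∀ y ∈ 𝒴, ∑ i, ∫ ω, y i ω ∂Q i ≤ 0) :
    NCA P (fun i => gains (F i) T (S i)) 𝒴 := by
  intro k y hy hk hky
  have hfin (i : Fin N) := (hQ i).isFiniteMeasure
  have hky_nonneg (i : Fin N) : 0 ≤ᵐ[Q i] k i + y i := (hQ i).absolutelyContinuous.ae_le (hky i)
  have hk_zero (i : Fin N) := integrable_gains_and_integral_eq_zero (hF i) (hF_le i) (hS i)
    (hQ i).martingaleUpTo (hk i) (h𝒴_int y hy i) (hky_nonneg i)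
  have hky_integral (i : Fin N) : ∫ ω, (k i + y i) ω ∂Q i = ∫ ω, y i ω ∂Q i := by
    rw [integral_add' (hk_zero i).1 (h𝒴_int y hy i), (hk_zero i).2, zero_add]
  have hky_integral_nonneg (i : Fin N) : 0 ≤ ∫ ω, (k i + y i) ω ∂Q i :=
    integral_nonneg_of_ae (hky_nonneg i)
  have hsum : ∑ i, ∫ ω, (k i + y i) ω ∂Q i = 0 :=
    le_antisymm (by simpa only [hky_integral] using h𝒴_le y hy)
      (Finset.sum_nonneg fun i _ => hky_integral_nonneg i)
  intro i
  have hzero := (Finset.sum_eq_zero_iff_of_nonneg fun i _ => hky_integral_nonneg i).1 hsum i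
    (Finset.mem_univ i)
  exact (hQ i).absolutelyContinuous'.ae_eq
    ((integral_eq_zero_iff_of_nonneg_ae (hky_nonneg i) ((hk_zero i).1.add (h𝒴_int y hy i))).1 hzero)

variable {𝒴 : Submodule ℝ (Fin N → Ω → ℝ)}

lemma noArb_gains_sup_exchangeClaims (hNCA : NCA P (fun i => gains (F i) T (S i)) 𝒴) :
    NoArb (sigmaMeasure fun _ : Fin N => P)
      (gains (fun t => sigmaSpace fun i => F i t) T
        (fun a t (x : (_ : Fin N) × Ω) => S x.1 a t x.2) ⊔ exchangeClaims 𝒴) := by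
  rintro g hg hg_nonneg
  obtain ⟨k, hk, e, he, rfl⟩ := Submodule.mem_sup.1 hg
  have hk_slice (i : Fin N) : (fun ω => k ⟨i, ω⟩) ∈ gains (F i) T (S i) :=
    mem_gains_of_mem_gains_sigmaSpace (α := fun _ => Ω) (𝒢 := F) hk i
  refine (ae_sigmaMeasure (α := fun _ => Ω)).2 ?_
  exact hNCA (fun i ω => k ⟨i, ω⟩) (fun i ω => e ⟨i, ω⟩) (mem_exchangeClaims.1 he) hk_slice
    ((ae_sigmaMeasure (α := fun _ => Ω)).1 hg_nonneg)

lemma measure_univ_eq_of_sum_integral_zeroSum_eq_zero [∀ i, IsFiniteMeasure (Q i)]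
    (hQ : ∀ y ∈ zeroSum Ω N, ∑ i, ∫ ω, y i ω ∂Q i = 0) (i j : Fin N) :
    Q i Set.univ = Q j Set.univ := by
  have hsum := hQ (fun l _ => (Pi.single i 1 - Pi.single j 1 : Fin N → ℝ) l)
    ⟨_, by simp, fun _ => rfl⟩
  have hreal : (Q i).real Set.univ = (Q j).real Set.univ := by
    simpa [mul_sub, Finset.sum_sub_distrib, Pi.single_apply, sub_eq_zero] using hsum
  exact (ENNReal.toReal_eq_toReal_iff' (measure_ne_top _ _) (measure_ne_top _ _)).1 hreal

variable {φ : Fin N → Ω → ℝ} [IsFiniteMeasure P]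

lemma exists_isMartingaleMeasure_of_NCA (hF : ∀ i, Monotone (F i)) (hF_le : ∀ i t, F i t ≤ m₀)
    (hS : ∀ i a, ∀ t ≤ T, Measurable[F i t] (S i a t)) (h𝒴 : 𝒴.FG)
    (h𝒴_meas : ∀ y ∈ 𝒴, ∀ i, Measurable (y i)) (hφ : ∀ i, Measurable (φ i))
    (hNCA : NCA P (fun i => gains (F i) T (S i)) 𝒴) :
    ∃ Q : Fin N → Measure Ω, (∀ i, IsMartingaleMeasure P (F i) T (S i) (Q i)) ∧
      (∀ i, Integrable (φ i) (Q i)) ∧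
      ∀ y ∈ 𝒴, (∀ i, Integrable (y i) (Q i)) ∧ ∑ i, ∫ ω, y i ω ∂Q i = 0 := by
  have hS' (a : A) (t : ℕ) (ht : t ≤ T) :
      Measurable[sigmaSpace fun i => F i t] fun x : (_ : Fin N) × Ω => S x.1 a t x.2 :=
    measurable_sigmaSpace.2 fun i => hS i a t ht
  obtain ⟨ρ, ⟨hρ, hρP, hPρ, hmart⟩, hφ_int, hzero⟩ := exists_isMartingaleMeasure_of_noArb
    (μ := sigmaMeasure fun _ : Fin N => P) (φ := fun x => φ x.1 x.2)
    (fun s t hst => sigmaSpace_mono fun i => hF i hst) (fun t => sigmaSpace_mono fun i => hF_le i t)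
    hS' (h𝒴.map _)
    (fun e he => measurable_sigmaSpace.2 (h𝒴_meas _ (mem_exchangeClaims.1 he)))
    (measurable_sigmaSpace.2 hφ) (noArb_gains_sup_exchangeClaims hNCA)
  have hslice (i : Fin N) : slice (sigmaMeasure fun _ : Fin N => P) i = P := slice_sigmaMeasure _ i
  refine ⟨slice ρ, fun i => ⟨inferInstance, ?_, ?_, fun a => (hmart a).slice hF hF_le (hS' a) i⟩,
    integrable_slice hφ_int, fun y hy => ?_⟩
  · exact hslice i ▸ slice_absolutelyContinuous hρP i
  · exact hslice i ▸ slice_absolutelyContinuous hPρ i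
  · obtain ⟨hy_int, hy_zero⟩ := hzero (fun x => y x.1 x.2) (mem_exchangeClaims.2 hy)
    exact ⟨integrable_slice hy_int, (sum_integral_slice hy_int).trans hy_zero⟩

theorem exists_isProbabilityMeasure_isMartingaleMeasure [NeZero P] (hF : ∀ i, Monotone (F i))
    (hF_le : ∀ i t, F i t ≤ m₀) (hS : ∀ i a, ∀ t ≤ T, Measurable[F i t] (S i a t)) (h𝒴 : 𝒴.FG)
    (h𝒴_zeroSum : zeroSum Ω N ⊆ 𝒴) (h𝒴_meas : ∀ y ∈ 𝒴, ∀ i, Measurable (y i))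
    (hφ : ∀ i, Measurable (φ i)) (hNCA : NCA P (fun i => gains (F i) T (S i)) 𝒴) :
    ∃ Q : Fin N → Measure Ω, (∀ i, IsProbabilityMeasure (Q i)) ∧
      (∀ i, IsMartingaleMeasure P (F i) T (S i) (Q i)) ∧ (∀ i, Integrable (φ i) (Q i)) ∧
      ∀ y ∈ 𝒴, (∀ i, Integrable (y i) (Q i)) ∧ ∑ i, ∫ ω, y i ω ∂Q i = 0 := by
  obtain ⟨Q, hQ, hφ_int, h𝒴_zero⟩ :=
    exists_isMartingaleMeasure_of_NCA hF hF_le hS h𝒴 h𝒴_meas hφ hNCA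
  have hfin (i : Fin N) := (hQ i).isFiniteMeasure
  have hmass := measure_univ_eq_of_sum_integral_zeroSum_eq_zero fun y hy =>
    (h𝒴_zero y (h𝒴_zeroSum hy)).2
  obtain hN | ⟨⟨i₀⟩⟩ := isEmpty_or_nonempty (Fin N)
  · exact ⟨Q, isEmptyElim, hQ, hφ_int, h𝒴_zero⟩
  have hmass_ne_zero : Q i₀ Set.univ ≠ 0 := fun h =>
    NeZero.ne P (Measure.measure_univ_eq_zero.1 ((hQ i₀).absolutelyContinuous' h))
  have hc : (Q i₀ Set.univ)⁻¹ ≠ ∞ := ENNReal.inv_ne_top.2 hmass_ne_zero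
  refine ⟨fun i => (Q i₀ Set.univ)⁻¹ • Q i, fun i => ⟨?_⟩,
    fun i => (hQ i).smul (hF_le i) (ENNReal.inv_ne_zero.2 (measure_ne_top _ _)) hc,
    fun i => (hφ_int i).smul_measure hc,
    fun y hy => ⟨fun i => ((h𝒴_zero y hy).1 i).smul_measure hc, ?_⟩⟩
  · rw [Measure.smul_apply, smul_eq_mul, hmass i i₀,
      ENNReal.inv_mul_cancel hmass_ne_zero (measure_ne_top _ _)]
  · simp only [integral_smul_measure, ← Finset.smul_sum, (h𝒴_zero y hy).2, smul_zero]

end CollectiveArbitrage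

section ConditionalExpectation

variable [m₀ : MeasurableSpace Ω] {𝒢 : ℕ → MeasurableSpace Ω} {Q : Measure Ω}

lemma condExp_ae_eq_integral_of_trivial [IsProbabilityMeasure Q] {m : MeasurableSpace Ω}
    (hm : m ≤ m₀) (h_trivial : ∀ B, MeasurableSet[m] B → Q B = 0 ∨ Q B = 1) {g : Ω → ℝ}
    (hg : Integrable g Q) : Q[g | m] =ᵐ[Q] fun _ => ∫ ω, g ω ∂Q := by
  refine (ae_eq_condExp_of_forall_setIntegral_eq hm hg
    (fun _ _ _ => (integrable_const _).integrableOn) (fun B hB _ => ?_)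
    stronglyMeasurable_const.aestronglyMeasurable).symm
  obtain hB_zero | hB_one := h_trivial B hB
  · simp only [setIntegral_measure_zero _ hB_zero]
  · have hmem : ∀ᵐ ω ∂Q, ω ∈ B := (prob_compl_eq_zero_iff (hm B hB)).2 hB_one
    simp [Measure.restrict_eq_self_of_ae_mem hmem]

lemma martingaleUpTo_condExp [IsFiniteMeasure Q] (h𝒢 : Monotone 𝒢) (h𝒢_le : ∀ t, 𝒢 t ≤ m₀)
    (T : ℕ) (g : Ω → ℝ) : MartingaleUpTo 𝒢 T (fun t => Q[g | 𝒢 t]) Q :=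
  ⟨fun _ _ => integrable_condExp,
    fun _ t hst _ => (condExp_condExp_of_le (h𝒢 hst) (h𝒢_le t)).symm⟩

lemma martingaleUpTo_zero (𝒢 : ℕ → MeasurableSpace Ω) (T : ℕ) (Q : Measure Ω) :
    MartingaleUpTo 𝒢 T 0 Q :=
  ⟨fun _ _ => integrable_zero _ _ _, fun _ _ _ _ => by simp only [Pi.zero_apply, condExp_zero]; rfl⟩

end ConditionalExpectation

section ExtendedMarket

variable {J : ℕ}

/-- The assets in `A` together with the new asset `Z`. To let all agents share one index type,
the assets outside `A` are replaced by the constant process `0`. -/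
def extendedAssets (A : Finset (Fin J)) (X : Fin J → ℕ → Ω → ℝ) (Z : ℕ → Ω → ℝ) :
    Option (Fin J) → ℕ → Ω → ℝ
  | none => Z
  | some j => if j ∈ A then X j else 0

variable {A : Finset (Fin J)} {X : Fin J → ℕ → Ω → ℝ} {Z : ℕ → Ω → ℝ}
  {𝒢 : ℕ → MeasurableSpace Ω} {T : ℕ}

lemma forall_extendedAssets_iff {p : (ℕ → Ω → ℝ) → Prop} (h_zero : p 0) :
    (∀ a, p (extendedAssets A X Z a)) ↔ (∀ j ∈ A, p (X j)) ∧ p Z := by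
  simp only [Option.forall, extendedAssets, and_comm (a := p Z)]
  refine and_congr_left' (forall_congr' fun j => ?_)
  by_cases hj : j ∈ A <;> simp [hj, h_zero]

lemma measurable_extendedAssets (hX : ∀ j ∈ A, ∀ t ≤ T, Measurable[𝒢 t] (X j t))
    (hZ : ∀ t ≤ T, Measurable[𝒢 t] (Z t)) :
    ∀ a, ∀ t ≤ T, Measurable[𝒢 t] (extendedAssets A X Z a t) :=
  (forall_extendedAssets_iff (p := fun Y => ∀ t ≤ T, Measurable[𝒢 t] (Y t))
    fun _ _ => measurable_const).2 ⟨hX, hZ⟩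

lemma extGainsSet_subset_gains : extGainsSet 𝒢 T A X Z ⊆ gains 𝒢 T (extendedAssets A X Z) := by
  have hmem (a : Option (Fin J)) (s : ℕ) (hs : s ∈ Finset.Icc 1 T) (h : Ω → ℝ)
      (hh : Measurable[𝒢 (s - 1)] h) :
      h * (extendedAssets A X Z a s - extendedAssets A X Z a (s - 1)) ∈
        gains 𝒢 T (extendedAssets A X Z) := by
    obtain ⟨hs_pos, hsT⟩ := Finset.mem_Icc.1 hs
    obtain ⟨t, rfl⟩ := Nat.exists_eq_add_of_le' hs_pos
    exact mul_increment_mem_gains hsT a hh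
  rintro g ⟨H, G, hH, hG, rfl⟩
  have hsum := add_mem
    (sum_mem fun j hj => sum_mem fun s hs => hmem (some j) s hs (H j s)
      (hH j hj s (Finset.mem_Icc.1 hs).1 (Finset.mem_Icc.1 hs).2))
    (sum_mem fun s hs => hmem none s hs (G s)
      (hG s (Finset.mem_Icc.1 hs).1 (Finset.mem_Icc.1 hs).2))
  rw [SetLike.mem_coe]
  convert hsum using 1
  ext ω
  simp only [Pi.add_apply, Finset.sum_apply, Pi.mul_apply, Pi.sub_apply]
  congr 1
  refine Finset.sum_congr rfl fun j hj => ?_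
  simp only [extendedAssets, if_pos hj]

lemma gains_subset_extGainsSet : ↑(gains 𝒢 T (extendedAssets A X Z)) ⊆ extGainsSet 𝒢 T A X Z := by
  intro k hk
  obtain ⟨H, hH, rfl⟩ := mem_gains_iff.1 hk
  refine ⟨fun j s => H (some j) (s - 1), fun s => H none (s - 1),
    fun j _ s hs hsT => hH _ _ (by omega), fun s hs hsT => hH _ _ (by omega), ?_⟩
  have hshift (g : ℕ → ℝ) : ∑ s ∈ Finset.Icc 1 T, g s = ∑ t ∈ Finset.range T, g (t + 1) := by
    rw [Finset.range_eq_Ico, Finset.sum_Ico_add' g 0 T 1]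
    rfl
  ext ω
  simp only [hshift, Nat.add_sub_cancel, Finset.sum_apply, Fintype.sum_option, Pi.add_apply,
    Pi.mul_apply, Pi.sub_apply, Finset.sum_add_distrib]
  rw [add_comm, Finset.sum_comm, ← Finset.sum_subset (Finset.subset_univ A)]
  · congr 1
    refine Finset.sum_congr rfl fun j hj => ?_
    simp only [extendedAssets, if_pos hj]
  · intro j _ hj
    simp [extendedAssets, hj]

lemma extGainsSet_eq_gains (𝒢 : ℕ → MeasurableSpace Ω) (T : ℕ) (A : Finset (Fin J))
    (X : Fin J → ℕ → Ω → ℝ) (Z : ℕ → Ω → ℝ) :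
    extGainsSet 𝒢 T A X Z = gains 𝒢 T (extendedAssets A X Z) :=
  extGainsSet_subset_gains.antisymm gains_subset_extGainsSet

lemma isMartingaleMeasure_extendedAssets_iff [MeasurableSpace Ω] {P Q : Measure Ω}
    [hQ : IsProbabilityMeasure Q] :
    IsMartingaleMeasure P 𝒢 T (extendedAssets A X Z) Q ↔
      Q ∈ martMeasures P 𝒢 T A X ∧ MartingaleUpTo 𝒢 T Z Q := by
  have h := forall_extendedAssets_iff (A := A) (X := X) (Z := Z) (p := (MartingaleUpTo 𝒢 T · Q))
    (martingaleUpTo_zero 𝒢 T Q)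
  exact ⟨fun ⟨_, hQP, hPQ, hmart⟩ => ⟨⟨hQ, hQP, hPQ, (h.1 hmart).1⟩, (h.1 hmart).2⟩,
    fun ⟨⟨_, hQP, hPQ, hX⟩, hZ⟩ => ⟨inferInstance, hQP, hPQ, h.2 ⟨hX, hZ⟩⟩⟩

end ExtendedMarket

section Exchanges

variable {N R : ℕ}

/-- The set `spanExch Ys` of exchanges as a linear space. -/
def exchangeSubmodule (Ys : Fin R → Fin N → Ω → ℝ) : Submodule ℝ (Fin N → Ω → ℝ) where
  carrier := spanExch Ys
  zero_mem' := ⟨0, 0, by simp, fun i => by ext ω; simp⟩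
  add_mem' := by
    rintro y y' ⟨x, c, hx, hy⟩ ⟨x', c', hx', hy'⟩
    refine ⟨x + x', c + c', by simp [Finset.sum_add_distrib, hx, hx'], fun i => ?_⟩
    ext ω
    simp [hy, hy', add_mul, Finset.sum_add_distrib, add_add_add_comm]
  smul_mem' := by
    rintro a y ⟨x, c, hx, hy⟩
    refine ⟨a • x, a • c, by simp [← Finset.mul_sum, hx], fun i => ?_⟩
    ext ω
    simp [hy, mul_add, Finset.mul_sum, mul_assoc]

lemma exchangeSubmodule_fg (Ys : Fin R → Fin N → Ω → ℝ) : (exchangeSubmodule Ys).FG := by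
  have := isNoetherian_span_of_finite ℝ
    ((Set.finite_range fun i : Fin N => Pi.single i (1 : Ω → ℝ)).union (Set.finite_range Ys))
  refine isNoetherian_submodule.1 this _ ?_
  rintro y ⟨x, c, -, hy⟩
  have hy_eq : y = ∑ i, x i • Pi.single i (1 : Ω → ℝ) + ∑ r, c r • Ys r := by
    ext i ω
    simp [hy, Pi.single_apply]
  rw [hy_eq]
  exact add_mem
    (sum_mem fun i _ => Submodule.smul_mem _ _ (Submodule.subset_span (.inl ⟨i, rfl⟩)))
    (sum_mem fun r _ => Submodule.smul_mem _ _ (Submodule.subset_span (.inr ⟨r, rfl⟩)))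

lemma zeroSum_subset_exchangeSubmodule (Ys : Fin R → Fin N → Ω → ℝ) :
    zeroSum Ω N ⊆ exchangeSubmodule Ys := by
  rintro y ⟨x, hx, hy⟩
  exact ⟨x, 0, hx, fun i => by simp [hy]⟩

lemma measurable_of_mem_exchangeSubmodule [MeasurableSpace Ω] {Ys : Fin R → Fin N → Ω → ℝ}
    (hYs : ∀ r i, Measurable (Ys r i)) {y : Fin N → Ω → ℝ} (hy : y ∈ exchangeSubmodule Ys)
    (i : Fin N) : Measurable (y i) := by
  obtain ⟨x, c, -, hy⟩ := hy
  rw [hy]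
  fun_prop

end Exchanges

section Prices

variable [m₀ : MeasurableSpace Ω] {P : Measure Ω} {T J N : ℕ} {F : Fin N → ℕ → MeasurableSpace Ω}
  {X : Fin J → ℕ → Ω → ℝ} {assets : Fin N → Finset (Fin J)} {f φ : Fin N → Ω → ℝ}

theorem IsNCAPrice.exists_mem_MeYphi [IsFiniteMeasure P] [NeZero P] (hF : ∀ i, Monotone (F i))
    (hF_le : ∀ i t, F i t ≤ m₀)
    (hX : ∀ i, ∀ j ∈ assets i, ∀ t ≤ T, Measurable[F i t] (X j t))
    {𝒴 : Submodule ℝ (Fin N → Ω → ℝ)} (h𝒴 : 𝒴.FG) (h𝒴_zeroSum : zeroSum Ω N ⊆ 𝒴)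
    (h𝒴_meas : ∀ y ∈ 𝒴, ∀ i, Measurable (y i)) (hφ : ∀ i, Measurable (φ i)) {pi : Fin N → ℝ}
    (hpi : IsNCAPrice P F T assets X 𝒴 f pi) :
    ∃ Q ∈ MeYphi P F T assets X 𝒴 φ, ∀ i, pi i = ∫ ω, f i ω ∂Q i := by
  obtain ⟨Z, hZ, hZ_zero, hZ_T, hNCA⟩ := hpi
  simp only [extGainsSet_eq_gains] at hNCA
  obtain ⟨Q, hQ_prob, hQ, hφ_int, h𝒴_zero⟩ := exists_isProbabilityMeasure_isMartingaleMeasure hF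
    hF_le (fun i => measurable_extendedAssets (hX i) (hZ i)) h𝒴 h𝒴_zeroSum h𝒴_meas hφ hNCA
  have hmart (i : Fin N) := isMartingaleMeasure_extendedAssets_iff.1 (hQ i)
  have hQP (i : Fin N) := (hQ i).absolutelyContinuous
  refine ⟨Q, ⟨⟨fun i => (hmart i).1, fun y hy => (h𝒴_zero y hy).1,
    fun y hy => (h𝒴_zero y hy).2.le⟩, hφ_int⟩, fun i => ?_⟩
  calc pi i = ∫ ω, Z i 0 ω ∂Q i := by simp [integral_congr_ae ((hQP i).ae_eq (hZ_zero i))]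
    _ = ∫ ω, Z i T ω ∂Q i := (hmart i).2.integral_eq (hF_le i) T.zero_le le_rfl
    _ = ∫ ω, f i ω ∂Q i := integral_congr_ae ((hQP i).ae_eq (hZ_T i))

theorem isNCAPrice_integral [IsProbabilityMeasure P] (hF : ∀ i, Monotone (F i))
    (hF_le : ∀ i t, F i t ≤ m₀) (hF_zero : ∀ i A, MeasurableSet[F i 0] A → P A = 0 ∨ P A = 1)
    (hX : ∀ i, ∀ j ∈ assets i, ∀ t ≤ T, Measurable[F i t] (X j t))
    {𝒴 : Set (Fin N → Ω → ℝ)} {Q : Fin N → Measure Ω} (hQ : Q ∈ MeY P F T assets X 𝒴)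
    (hf : ∀ i, Measurable[F i T] (f i)) (hf_int : ∀ i, Integrable (f i) (Q i)) :
    IsNCAPrice P F T assets X 𝒴 f fun i => ∫ ω, f i ω ∂Q i := by
  obtain ⟨hQ, h𝒴_int, h𝒴_le⟩ := hQ
  have hQ_prob (i : Fin N) : IsProbabilityMeasure (Q i) := (hQ i).1
  have hQP (i : Fin N) : Q i ≪ P := (hQ i).2.1
  have hPQ (i : Fin N) : P ≪ Q i := (hQ i).2.2.1
  have hZ (i : Fin N) (t : ℕ) : Measurable[F i t] ((Q i)[f i | F i t]) :=
    stronglyMeasurable_condExp.measurable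
  refine ⟨fun i t => (Q i)[f i | F i t], fun i t _ => hZ i t, fun i => (hPQ i).ae_eq ?_,
    fun i => ?_, ?_⟩
  · refine condExp_ae_eq_integral_of_trivial (hF_le i 0) (fun B hB => ?_) (hf_int i)
    have hB' := hF_le i 0 B hB
    refine (hF_zero i B hB).imp (@hQP i B) fun h => ?_
    exact (prob_compl_eq_zero_iff hB').1 (hQP i ((prob_compl_eq_zero_iff hB').2 h))
  · exact .of_eq (condExp_of_stronglyMeasurable (hF_le i T) (hf i).stronglyMeasurable (hf_int i))
  · simp only [extGainsSet_eq_gains]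
    exact NCA_of_isMartingaleMeasure hF hF_le
      (fun i => measurable_extendedAssets (hX i) fun t _ => hZ i t)
      (fun i => isMartingaleMeasure_extendedAssets_iff.2
        ⟨hQ i, martingaleUpTo_condExp (hF i) (hF_le i) T (f i)⟩) h𝒴_int h𝒴_le

theorem NCA_prices_eq_expectations_general [IsProbabilityMeasure P] (hF : ∀ i, Monotone (F i))
    (hF_le : ∀ i t, F i t ≤ m₀) (hF_zero : ∀ i A, MeasurableSet[F i 0] A → P A = 0 ∨ P A = 1)
    (hX : ∀ i, ∀ j ∈ assets i, ∀ t ≤ T, Measurable[F i t] (X j t))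
    {𝒴 : Submodule ℝ (Fin N → Ω → ℝ)} (h𝒴 : 𝒴.FG) (h𝒴_zeroSum : zeroSum Ω N ⊆ 𝒴)
    (h𝒴_meas : ∀ y ∈ 𝒴, ∀ i, Measurable (y i)) (hf : ∀ i, Measurable[F i T] (f i))
    (hφ : ∀ i, Measurable (φ i)) (hfφ : ∀ i, ∀ᵐ ω ∂P, |f i ω| ≤ φ i ω) :
    {pi : Fin N → ℝ | IsNCAPrice P F T assets X 𝒴 f pi} =
      {pi : Fin N → ℝ | ∃ Q ∈ MeYphi P F T assets X 𝒴 φ, ∀ i, pi i = ∫ ω, f i ω ∂Q i} := by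
  refine Set.Subset.antisymm
    (fun pi hpi => hpi.exists_mem_MeYphi hF hF_le hX h𝒴 h𝒴_zeroSum h𝒴_meas hφ) ?_
  rintro pi ⟨Q, ⟨hQ, hφ_int⟩, hpi⟩
  have hf_int (i : Fin N) : Integrable (f i) (Q i) := (hφ_int i).mono'
    ((hf i).mono (hF_le i T) le_rfl).aestronglyMeasurable ((hQ.1 i).2.1.ae_le (hfφ i))
  exact funext hpi ▸ isNCAPrice_integral hF hF_le hF_zero hX hQ hf hf_int

end Prices

/-- characterization of NCA(𝒴)-prices (Theorem BaseFTAPII). -/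
theorem NCA_prices_eq_expectations
    {Ω : Type*} [m0 : MeasurableSpace Ω]
    (P : Measure Ω) [IsProbabilityMeasure P]
    (T J N : ℕ) (hT : 1 ≤ T) (hJ : 1 ≤ J) (hN : 1 ≤ N)
    (F : Fin N → ℕ → MeasurableSpace Ω)
    (hFmono : ∀ i, Monotone (F i))
    (hFle : ∀ i t, F i t ≤ m0)
    (hFzero : ∀ i, ∀ A : Set Ω, MeasurableSet[F i 0] A → P A = 0 ∨ P A = 1)
    (X : Fin J → ℕ → Ω → ℝ)
    (assets : Fin N → Finset (Fin J))
    (hassets : ∀ i, (assets i).Nonempty)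
    (hcover : ∀ j, ∃ i, j ∈ assets i)
    (hadapted : ∀ i, ∀ j ∈ assets i, ∀ t, t ≤ T → Measurable[F i t] (X j t))
    (R : ℕ) (Ys : Fin R → Fin N → Ω → ℝ)
    (hYsmeas : ∀ r i, Measurable[F i T] (Ys r i))
    (hNCA : NCA P (fun i => gainsSet (F i) T (assets i) X) (spanExch Ys))
    (f φ : Fin N → Ω → ℝ)
    (hfmeas : ∀ i, Measurable[F i T] (f i))
    (hφmeas : ∀ i, Measurable[F i T] (φ i))
    (hdom_f : ∀ i, ∀ᵐ ω ∂P, |f i ω| ≤ φ i ω)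
    (hdom_Y : ∀ r, ∀ i, ∀ᵐ ω ∂P, |Ys r i ω| ≤ φ i ω) :
    { pi : Fin N → ℝ | IsNCAPrice P F T assets X (spanExch Ys) f pi }
      = { pi : Fin N → ℝ | ∃ Q ∈ MeYphi P F T assets X (spanExch Ys) φ,
          ∀ i, pi i = ∫ ω, f i ω ∂(Q i) } := by
  exact NCA_prices_eq_expectations_general hFmono hFle hFzero hadapted (exchangeSubmodule_fg Ys)
    (zeroSum_subset_exchangeSubmodule Ys)
    (fun _ => measurable_of_mem_exchangeSubmodule fun r i => (hYsmeas r i).mono (hFle i T) le_rfl)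
    hfmeas (fun i => (hφmeas i).mono (hFle i T) le_rfl) hdom_f

end CollectiveArb
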